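/- Let B be the open unit ball of ℝ^m (m ≥ 2), and let u, v : B → [-∞, +∞) be subharmonic functions with associated Riesz measures Δu and Δv. Suppose v ≤ u on B and the measure Δu gives zero mass to the set {x ∈ B : u(x) ≠ -∞}. Then Δv ≥ Δu as measures on B. -/

import Mathlib

open MeasureTheory Metric Filter Topology

noncomputable section

variable {m : ℕ}

/-- Second derivative of `f : ℝ^m → ℝ` at `x` in direction `v`. -/
def secondDeriv (f : EuclideanSpace ℝ (Fin m) → ℝ) (x v : EuclideanSpace ℝ (Fin m)) : ℝ :=
  fderiv ℝ (fun y => fderiv ℝ f y v) x v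

/-- The Laplacian of `f : ℝ^m → ℝ` at `x`: the sum of the pure second derivatives in the
coordinate directions. -/
def lap (f : EuclideanSpace ℝ (Fin m) → ℝ) (x : EuclideanSpace ℝ (Fin m)) : ℝ :=
  ∑ i : Fin m, secondDeriv f x (EuclideanSpace.single i 1)

/-- `h` is harmonic at `x`: twice continuously differentiable with vanishing Laplacian. -/
def HarmonicAt (h : EuclideanSpace ℝ (Fin m) → ℝ) (x : EuclideanSpace ℝ (Fin m)) : Prop :=
  ContDiffAt ℝ 2 h x ∧ lap h x = 0

/-- `u : B → [-∞, +∞)` is subharmonic on `B`: it is upper semicontinuous on `B`, takes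
values in `[-∞, +∞)`, is not identically `-∞`, and satisfies the harmonic-majorization
property: on any closed ball inside `B`, any continuous function harmonic inside that
dominates `u` on the boundary sphere dominates `u` throughout the ball. -/
def SubharmonicOn (u : EuclideanSpace ℝ (Fin m) → EReal)
    (B : Set (EuclideanSpace ℝ (Fin m))) : Prop :=
  UpperSemicontinuousOn u B ∧ (∀ x ∈ B, u x < ⊤) ∧ (∃ x ∈ B, u x ≠ ⊥) ∧
    ∀ z r, 0 < r → closedBall z r ⊆ B →
      ∀ h : EuclideanSpace ℝ (Fin m) → ℝ, ContinuousOn h (closedBall z r) →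
        (∀ w ∈ ball z r, HarmonicAt h w) →
        (∀ w ∈ sphere z r, u w ≤ (h w : EReal)) →
        ∀ w ∈ ball z r, u w ≤ (h w : EReal)

/-- `μ` is the Riesz measure `Δu` of the subharmonic function `u` on the open set `B`:
a locally finite positive Borel measure carried by `B` such that, distributionally,
`∫ u · Δφ = ∫ φ dμ` for all test functions `φ` supported in `B`. -/
def IsRieszMeasureOf (u : EuclideanSpace ℝ (Fin m) → EReal)
    (B : Set (EuclideanSpace ℝ (Fin m))) (μ : Measure (EuclideanSpace ℝ (Fin m))) : Prop :=
  (∀ s, μ s = μ (s ∩ B)) ∧ (∀ x ∈ B, ∃ U ∈ nhds x, μ U < ⊤) ∧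
    ∀ φ : EuclideanSpace ℝ (Fin m) → ℝ, ContDiff ℝ (⊤ : ℕ∞) φ → HasCompactSupport φ →
      tsupport φ ⊆ B →
      ∫ x in B, (u x).toReal * lap φ x = ∫ x, φ x ∂μ

/-!
Fix `t > 1` and `s`, and put `w = max (t * v) (u - s)`. Where `u < -s / (t - 1)`, an open
neighbourhood of `{u = -∞}`, the inequality `v ≤ u` gives `w = u - s`, so `Δw` and `Δu` agree on
this set, which carries all of `Δu`. Since `Δw` is positive, `∫ φ dΔu ≤ ∫ w Δφ` for every test
function `φ ≥ 0`; letting `s → ∞` and `t → 1` gives `w → v` almost everywhere and thus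
`∫ φ dΔu ≤ ∫ φ dΔv`.

Harmonic majorization has to be turned into two facts about an arbitrary subharmonic function, its
local integrability and the positivity of its distributional Laplacian. Truncated from below it
becomes a bounded viscosity subharmonic function, and the parabolic maximum principle compares such
a function with its evolution under the heat semigroup. Kernel bounds then yield integrability, and
differentiating the comparison at time zero yields positivity.
-/

open ProbabilityTheory InnerProductSpace

local notation "𝔼" => EuclideanSpace ℝ (Fin m)

section Gaussian

variable {E : Type*} [NormedAddCommGroup E] [InnerProductSpace ℝ E]

/-- The density `(2π)^(-n/2) exp (-‖z‖² / 2)` of the standard Gaussian law, `n = dim E`. -/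
def gaussianDensity (z : E) : ℝ :=
  (2 * Real.pi) ^ (-(Module.finrank ℝ E / 2 : ℝ)) * Real.exp (-(1 / 2) * ‖z‖ ^ 2)

lemma gaussianDensity_pos (z : E) : 0 < gaussianDensity z := by
  unfold gaussianDensity
  positivity

@[fun_prop]
lemma continuous_gaussianDensity : Continuous (gaussianDensity : E → ℝ) := by
  unfold gaussianDensity
  fun_prop

lemma hasFDerivAt_gaussianDensity (z : E) :
    HasFDerivAt gaussianDensity (-(gaussianDensity z) • innerSL ℝ z) z := by
  have h := (((hasStrictFDerivAt_norm_sq z).hasFDerivAt.const_mul (-(1 / 2) : ℝ)).exp).const_mul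
    ((2 * Real.pi) ^ (-(Module.finrank ℝ E / 2 : ℝ)))
  refine h.congr_fderiv ?_
  ext w
  simp only [gaussianDensity, smul_apply, innerSL_apply_apply, smul_eq_mul]
  ring

lemma gaussianDensity_le_of_norm_le {z w : E} (h : ‖w‖ ≤ ‖z‖) :
    gaussianDensity z ≤ gaussianDensity w := by
  unfold gaussianDensity
  gcongr _ * Real.exp ?_
  nlinarith [norm_nonneg w]

variable [FiniteDimensional ℝ E] [MeasurableSpace E] [BorelSpace E]

lemma integrable_gaussianDensity : Integrable (gaussianDensity : E → ℝ) := by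
  refine Integrable.const_mul ?_ _
  refine (GaussianFourier.integrable_cexp_neg_mul_sq_norm_add (V := E) (b := 1 / 2)
    (by simp) 0 0).norm.congr (Eventually.of_forall fun z => ?_)
  simp only [Complex.norm_exp]
  simp [← Complex.ofReal_pow]

lemma stdGaussian_eq_withDensity :
    stdGaussian E = volume.withDensity (fun z => ENNReal.ofReal (gaussianDensity z)) := by
  have : IsFiniteMeasure (volume.withDensity fun z : E => ENNReal.ofReal (gaussianDensity z)) :=
    isFiniteMeasure_withDensity_ofReal integrable_gaussianDensity.2
  refine Measure.ext_of_charFun (funext fun t => ?_)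
  have hchar : ∀ x : E, gaussianDensity x • Complex.exp (⟪x, t⟫_ℝ * Complex.I) =
      ((2 * Real.pi : ℝ) ^ (-(Module.finrank ℝ E / 2 : ℝ)) : ℝ) *
        Complex.exp (-(1 / 2) * ‖x‖ ^ 2 + Complex.I * ⟪t, x⟫_ℝ) := fun x => by
    rw [gaussianDensity, Complex.real_smul, Complex.exp_add, real_inner_comm]
    push_cast
    ring_nf
  rw [charFun_stdGaussian, charFun_apply, integral_withDensity_eq_integral_toReal_smul
    (by fun_prop) (Eventually.of_forall fun _ => ENNReal.ofReal_lt_top)]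
  simp only [ENNReal.toReal_ofReal (gaussianDensity_pos _).le, hchar]
  rw [integral_const_mul, GaussianFourier.integral_cexp_neg_mul_sq_norm_add (by simp),
    ← mul_assoc]
  have hone : (((2 * Real.pi : ℝ) ^ (-(Module.finrank ℝ E / 2 : ℝ)) : ℝ) : ℂ) *
      ((Real.pi : ℂ) / (1 / 2)) ^ ((Module.finrank ℝ E : ℂ) / 2) = 1 := by
    rw [show (Real.pi : ℂ) / (1 / 2) = ((2 * Real.pi : ℝ) : ℂ) by push_cast; ring,
      show (Module.finrank ℝ E : ℂ) / 2 = ((Module.finrank ℝ E / 2 : ℝ) : ℂ) by push_cast; ring,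
      ← Complex.ofReal_cpow (by positivity), ← Complex.ofReal_mul,
      ← Real.rpow_add (by positivity)]
    simp
  rw [hone, one_mul, Complex.I_sq]
  ring_nf

lemma integral_stdGaussian_eq {F : Type*} [NormedAddCommGroup F] [NormedSpace ℝ F] (f : E → F) :
    ∫ z, f z ∂stdGaussian E = ∫ z, gaussianDensity z • f z := by
  rw [stdGaussian_eq_withDensity, integral_withDensity_eq_integral_toReal_smul (by fun_prop)
    (Eventually.of_forall fun _ => ENNReal.ofReal_lt_top)]
  simp only [ENNReal.toReal_ofReal (gaussianDensity_pos _).le]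

lemma integrable_stdGaussian_iff {F : Type*} [NormedAddCommGroup F] [NormedSpace ℝ F]
    {f : E → F} :
    Integrable f (stdGaussian E) ↔ Integrable (fun z => gaussianDensity z • f z) := by
  rw [stdGaussian_eq_withDensity, integrable_withDensity_iff_integrable_smul' (by fun_prop)
    (Eventually.of_forall fun _ => ENNReal.ofReal_lt_top)]
  simp only [ENNReal.toReal_ofReal (gaussianDensity_pos _).le]

lemma integrable_norm_pow_stdGaussian (n : ℕ) :
    Integrable (fun z : E => ‖z‖ ^ n) (stdGaussian E) :=
  (IsGaussian.memLp_id (stdGaussian E) n (by simp)).integrable_norm_pow'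

lemma integral_mul_inner_stdGaussian {h : E → ℝ} (hd : Differentiable ℝ h) (e : E)
    (hint : Integrable h (stdGaussian E))
    (hint_inner : Integrable (fun z => h z * ⟪z, e⟫_ℝ) (stdGaussian E))
    (hint_deriv : Integrable (fun z => fderiv ℝ h z e) (stdGaussian E)) :
    ∫ z, h z * ⟪z, e⟫_ℝ ∂stdGaussian E = ∫ z, fderiv ℝ h z e ∂stdGaussian E := by
  have hde : ∀ z : E, fderiv ℝ gaussianDensity z e = -(gaussianDensity z * ⟪z, e⟫_ℝ) := fun z => by
    simp [(hasFDerivAt_gaussianDensity z).fderiv]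
  rw [integrable_stdGaussian_iff] at hint hint_inner hint_deriv
  simp only [smul_eq_mul, mul_comm (gaussianDensity _)] at hint hint_inner hint_deriv
  have key := integral_mul_fderiv_eq_neg_fderiv_mul_of_integrable (μ := (volume : Measure E))
    (f := h) (g := gaussianDensity) (v := e) hint_deriv
    (hint_inner.neg.congr (Eventually.of_forall fun z => by simp [hde]; ring)) hint
    (fun z _ => hd z) (fun z _ => (hasFDerivAt_gaussianDensity z).differentiableAt)
  simp only [hde, mul_neg, integral_neg, neg_inj] at key
  rw [integral_stdGaussian_eq, integral_stdGaussian_eq]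
  calc ∫ z, gaussianDensity z • (h z * ⟪z, e⟫_ℝ)
      = ∫ z, h z * (gaussianDensity z * ⟪z, e⟫_ℝ) := by
        congr 1; ext z; rw [smul_eq_mul]; ring
    _ = ∫ z, gaussianDensity z • fderiv ℝ h z e := by
        rw [key]; congr 1; ext z; rw [smul_eq_mul, mul_comm]

end Gaussian

section SecondOrder

variable {E : Type*} [NormedAddCommGroup E] [NormedSpace ℝ E]

/-- The polynomial `c + L (x - x₀) + ½ T (x - x₀) (x - x₀)` of degree two centred at `x₀`; the
bilinear form `T` need not be symmetric. -/
def quadraticPoly (c : ℝ) (L : E →L[ℝ] ℝ) (T : E →L[ℝ] E →L[ℝ] ℝ) (x₀ x : E) : ℝ :=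
  c + L (x - x₀) + 1 / 2 * T (x - x₀) (x - x₀)

variable (c : ℝ) (L : E →L[ℝ] ℝ) (T : E →L[ℝ] E →L[ℝ] ℝ) (x₀ : E)

lemma contDiff_quadraticPoly : ContDiff ℝ 2 (quadraticPoly c L T x₀) := by
  unfold quadraticPoly
  fun_prop

lemma hasFDerivAt_quadraticPoly (x : E) :
    HasFDerivAt (quadraticPoly c L T x₀)
      (L + (1 / 2 : ℝ) • (T (x - x₀) + T.flip (x - x₀))) x := by
  have hsub : HasFDerivAt (fun x : E => x - x₀) (ContinuousLinearMap.id ℝ E) x :=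
    (hasFDerivAt_id x).sub_const x₀
  have hT := (T.hasFDerivAt.comp x hsub).clm_apply hsub
  refine (((L.hasFDerivAt.comp x hsub).const_add c).add (hT.const_mul (1 / 2))).congr_fderiv ?_
  ext v
  simp

lemma isLittleO_sub_quadraticPoly {f : E → ℝ} (hf : ContDiff ℝ 2 f) :
    (fun x => f x - quadraticPoly (f x₀) (fderiv ℝ f x₀) (fderiv ℝ (fderiv ℝ f) x₀) x₀ x)
      =o[𝓝 x₀] fun x => ‖x - x₀‖ ^ 2 := by
  set q := quadraticPoly (f x₀) (fderiv ℝ f x₀) (fderiv ℝ (fderiv ℝ f) x₀) x₀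
  have hsymm : ∀ v w, fderiv ℝ (fderiv ℝ f) x₀ v w = fderiv ℝ (fderiv ℝ f) x₀ w v :=
    hf.contDiffAt.isSymmSndFDerivAt (by simp)
  have hderiv : ∀ x, HasFDerivAt (fun x => f x - q x)
      (fderiv ℝ f x - fderiv ℝ f x₀ - fderiv ℝ (fderiv ℝ f) x₀ (x - x₀)) x := fun x => by
    refine ((hf.differentiable two_ne_zero x).hasFDerivAt.sub
      (hasFDerivAt_quadraticPoly _ _ _ x₀ x)).congr_fderiv ?_
    ext v
    simp only [sub_apply, add_apply, smul_apply, ContinuousLinearMap.flip_apply, smul_eq_mul,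
      hsymm v (x - x₀)]
    ring
  have hderiv_small : (fun x => fderiv ℝ f x - fderiv ℝ f x₀ -
      fderiv ℝ (fderiv ℝ f) x₀ (x - x₀)) =o[𝓝 x₀] fun x => ‖x - x₀‖ ^ 1 := by
    simpa only [pow_one] using (((hf.fderiv_right (m := 1) (by norm_num)).differentiable
      one_ne_zero x₀).hasFDerivAt.isLittleO).norm_right
  have h := convex_univ.isLittleO_pow_succ (Set.mem_univ x₀)
    (fun x _ => (hderiv x).hasFDerivWithinAt) (by rwa [nhdsWithin_univ])
  simpa [q, quadraticPoly, nhdsWithin_univ] using h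

end SecondOrder

section Laplacian

lemma secondDeriv_eq_fderiv_fderiv {g : 𝔼 → ℝ} (hg : ContDiff ℝ 2 g) (x v : 𝔼) :
    secondDeriv g x v = fderiv ℝ (fderiv ℝ g) x v v := by
  rw [secondDeriv, fderiv_clm_apply ((hg.fderiv_right (m := 1) (by norm_num)).differentiable
    one_ne_zero x) (differentiableAt_const v)]
  simp

lemma lap_eq_sum_fderiv_fderiv {g : 𝔼 → ℝ} (hg : ContDiff ℝ 2 g) (x : 𝔼) :
    lap g x = ∑ i : Fin m, fderiv ℝ (fderiv ℝ g) x (EuclideanSpace.single i 1)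
      (EuclideanSpace.single i 1) :=
  Finset.sum_congr rfl fun _ _ => secondDeriv_eq_fderiv_fderiv hg x _

lemma lap_eq_laplacian {g : 𝔼 → ℝ} (hg : ContDiff ℝ 2 g) : lap g = Laplacian.laplacian g := by
  ext x
  rw [laplacian_eq_iteratedFDeriv_orthonormalBasis g (EuclideanSpace.basisFun (Fin m) ℝ)]
  simp [lap_eq_sum_fderiv_fderiv hg, iteratedFDeriv_two_apply]

lemma lap_quadraticPoly (c : ℝ) (L : 𝔼 →L[ℝ] ℝ) (T : 𝔼 →L[ℝ] 𝔼 →L[ℝ] ℝ) (x₀ x : 𝔼) :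
    lap (quadraticPoly c L T x₀) x =
      ∑ i : Fin m, T (EuclideanSpace.single i 1) (EuclideanSpace.single i 1) := by
  refine Finset.sum_congr rfl fun i _ => ?_
  set e : 𝔼 := EuclideanSpace.single i 1
  have hT : HasFDerivAt (fun y : 𝔼 => L e + 1 / 2 * (T (y - x₀) e + T e (y - x₀)))
      ((1 / 2 : ℝ) • (T.flip e + T e)) x := by
    have hsub : HasFDerivAt (fun x : 𝔼 => x - x₀) (ContinuousLinearMap.id ℝ 𝔼) x :=
      (hasFDerivAt_id x).sub_const x₀
    exact (((((T.flip e).hasFDerivAt.comp x hsub).add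
      ((T e).hasFDerivAt.comp x hsub)).const_mul (1 / 2)).const_add (L e))
  have hfun : (fun y => fderiv ℝ (quadraticPoly c L T x₀) y e) =
      fun y => L e + 1 / 2 * (T (y - x₀) e + T e (y - x₀)) := by
    ext y
    simp only [(hasFDerivAt_quadraticPoly c L T x₀ y).fderiv, add_apply, smul_apply,
      ContinuousLinearMap.flip_apply, smul_eq_mul]
  rw [secondDeriv, hfun, hT.fderiv]
  simp
  ring

lemma continuous_secondDeriv {g : 𝔼 → ℝ} (hg : ContDiff ℝ 2 g) (v : 𝔼) :
    Continuous fun x => secondDeriv g x v :=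
  (((hg.fderiv_right (m := 1) (by norm_num)).clm_apply contDiff_const).continuous_fderiv
    one_ne_zero).clm_apply continuous_const

lemma hasCompactSupport_secondDeriv {g : 𝔼 → ℝ} (hg : HasCompactSupport g) (v : 𝔼) :
    HasCompactSupport fun x => secondDeriv g x v :=
  (hg.fderiv_apply ℝ v).fderiv_apply ℝ v

lemma integrable_secondDeriv {g : 𝔼 → ℝ} (hg : ContDiff ℝ 2 g) (hc : HasCompactSupport g)
    (v : 𝔼) : Integrable fun x => secondDeriv g x v :=
  (continuous_secondDeriv hg v).integrable_of_hasCompactSupport (hasCompactSupport_secondDeriv hc v)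

lemma continuous_lap {g : 𝔼 → ℝ} (hg : ContDiff ℝ 2 g) : Continuous (lap g) :=
  continuous_finsetSum _ fun _ _ => continuous_secondDeriv hg _

lemma lap_eq_zero_of_notMem_tsupport {g : 𝔼 → ℝ} {x : 𝔼} (hx : x ∉ tsupport g) : lap g x = 0 := by
  refine Finset.sum_eq_zero fun i _ => ?_
  have h : (fun y => fderiv ℝ g y (EuclideanSpace.single i 1)) =ᶠ[𝓝 x] fun _ => 0 := by
    filter_upwards [(notMem_tsupport_iff_eventuallyEq.1 hx).fderiv (𝕜 := ℝ)] with y hy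
    simp [hy]
  simp [secondDeriv, h.fderiv_eq]

lemma hasCompactSupport_lap {g : 𝔼 → ℝ} (hg : HasCompactSupport g) : HasCompactSupport (lap g) :=
  HasCompactSupport.intro hg fun _ => lap_eq_zero_of_notMem_tsupport

lemma secondDeriv_nonneg_of_isLocalMin {g : 𝔼 → ℝ} (hg : ContDiff ℝ 2 g) {x : 𝔼}
    (hmin : IsLocalMin g x) (v : 𝔼) : 0 ≤ secondDeriv g x v := by
  have hline : ∀ s : ℝ, HasDerivAt (fun s : ℝ => x + s • v) v s := fun s => by
    simpa using ((hasDerivAt_id s).smul_const v).const_add x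
  have hderiv : deriv (fun s : ℝ => g (x + s • v)) = fun s => fderiv ℝ g (x + s • v) v :=
    funext fun s => ((hg.differentiable two_ne_zero _).hasFDerivAt.comp_hasDerivAt s
      (hline s)).deriv
  have hderiv₂ : deriv (deriv fun s : ℝ => g (x + s • v)) 0 = secondDeriv g x v := by
    have hd : DifferentiableAt ℝ (fun y => fderiv ℝ g y v) (x + (0 : ℝ) • v) :=
      ((hg.fderiv_right (m := 1) (by norm_num)).clm_apply contDiff_const).differentiable
        one_ne_zero _
    have h := (hd.hasFDerivAt.comp_hasDerivAt (0 : ℝ) (hline 0)).deriv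
    rw [zero_smul, add_zero] at h
    rw [hderiv]
    exact h
  have hmin₀ : IsLocalMin (fun s : ℝ => g (x + s • v)) 0 := by
    have hmin' : IsLocalMin g (x + (0 : ℝ) • v) := by simpa using hmin
    exact hmin'.comp_continuous (g := fun s : ℝ => x + s • v) (by fun_prop)
  have hcont : ContinuousAt (fun s : ℝ => g (x + s • v)) 0 := by
    have := hg.continuous
    fun_prop
  by_contra! hneg
  rw [← hderiv₂] at hneg
  have hmax := isLocalMax_of_deriv_deriv_neg hneg hmin₀.deriv_eq_zero hcont
  have hconst : (fun s : ℝ => g (x + s • v)) =ᶠ[𝓝 0] fun _ => g (x + (0 : ℝ) • v) :=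
    (hmin₀.and hmax).mono fun s hs => le_antisymm hs.2 hs.1
  simp [hconst.deriv.deriv_eq] at hneg

lemma lap_nonneg_of_isLocalMin {g : 𝔼 → ℝ} (hg : ContDiff ℝ 2 g) {x : 𝔼} (hmin : IsLocalMin g x) :
    0 ≤ lap g x :=
  Finset.sum_nonneg fun _ _ => secondDeriv_nonneg_of_isLocalMin hg hmin _

lemma integral_lap_eq_zero {g : 𝔼 → ℝ} (hg : ContDiff ℝ 2 g) (hc : HasCompactSupport g) :
    ∫ x, lap g x = 0 := by
  simp only [lap]
  rw [integral_finsetSum _ fun _ _ => integrable_secondDeriv hg hc _]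
  refine Finset.sum_eq_zero fun i _ => ?_
  have hC1 : ContDiff ℝ 1 fun y => fderiv ℝ g y (EuclideanSpace.single i (1 : ℝ)) :=
    (hg.fderiv_right (m := 1) (by norm_num)).clm_apply contDiff_const
  have h := integral_mul_fderiv_eq_neg_fderiv_mul_of_integrable (μ := (volume : Measure 𝔼))
    (f := fun _ => (1 : ℝ)) (v := EuclideanSpace.single i 1) (by simp)
    (by simp only [one_mul]; exact integrable_secondDeriv hg hc _)
    (by simpa using hC1.continuous.integrable_of_hasCompactSupport (hc.fderiv_apply ℝ _))
    (by simp) fun x _ => hC1.differentiable one_ne_zero x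
  simp only [one_mul, fderiv_fun_const, Pi.zero_apply, zero_apply, zero_mul,
    integral_zero, neg_zero] at h
  exact h

end Laplacian

section HeatSemigroup

variable {E F : Type*} [NormedAddCommGroup E] [InnerProductSpace ℝ E] [FiniteDimensional ℝ E]
  [MeasurableSpace E] [BorelSpace E] [NormedAddCommGroup F]

lemma integrable_comp_add_smul_stdGaussian {g : E → F} {C : ℝ} (hg : StronglyMeasurable g)
    (hC : ∀ x, ‖g x‖ ≤ C) (x : E) (s : ℝ) :
    Integrable (fun z => g (x + s • z)) (stdGaussian E) :=
  .of_bound (hg.comp_measurable (by fun_prop)).aestronglyMeasurable C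
    (Eventually.of_forall fun _ => hC _)

lemma integrable_comp_add_smul_stdGaussian_of_hasCompactSupport {g : E → F} (hg : Continuous g)
    (hc : HasCompactSupport g) (x : E) (s : ℝ) :
    Integrable (fun z => g (x + s • z)) (stdGaussian E) :=
  let ⟨_, hC⟩ := hc.exists_bound_of_continuous hg
  integrable_comp_add_smul_stdGaussian hg.stronglyMeasurable hC x s

variable [NormedSpace ℝ F]

/-- The heat semigroup `P_t g (x) = E[g (x + √t Z)]`, `Z` standard Gaussian, with generator `Δ / 2`;
it is `P_0` for `t < 0`. -/
def heatSemigroup (t : ℝ) (g : E → F) (x : E) : F :=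
  ∫ z, g (x + √t • z) ∂stdGaussian E

@[simp]
lemma heatSemigroup_zero [CompleteSpace F] (g : E → F) : heatSemigroup 0 g = g := by
  ext x
  simp [heatSemigroup]

lemma norm_heatSemigroup_le {g : E → F} {C : ℝ} (hC : ∀ x, ‖g x‖ ≤ C) (t : ℝ) (x : E) :
    ‖heatSemigroup t g x‖ ≤ C := by
  simpa [heatSemigroup] using norm_integral_le_of_norm_le_const (μ := stdGaussian E)
    (f := fun z => g (x + √t • z)) (Eventually.of_forall fun _ => hC _)

lemma heatSemigroup_le_add_const {g h : E → ℝ} {C D c : ℝ} (hg : StronglyMeasurable g)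
    (hC : ∀ x, ‖g x‖ ≤ C) (hh : StronglyMeasurable h) (hD : ∀ x, ‖h x‖ ≤ D)
    (hle : ∀ x, g x ≤ h x + c) (t : ℝ) (x : E) :
    heatSemigroup t g x ≤ heatSemigroup t h x + c := by
  have hint := integrable_comp_add_smul_stdGaussian hh hD x √t
  calc heatSemigroup t g x
      ≤ ∫ z, (h (x + √t • z) + c) ∂stdGaussian E :=
        integral_mono (integrable_comp_add_smul_stdGaussian hg hC x _)
          (hint.add (integrable_const _)) fun _ => hle _
    _ = heatSemigroup t h x + c := by
        rw [integral_add hint (integrable_const _)]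
        simp [heatSemigroup]

lemma tendsto_heatSemigroup {G : ℕ → E → F} {g : E → F} {C : ℝ}
    (hG : ∀ n, StronglyMeasurable (G n)) (hC : ∀ n x, ‖G n x‖ ≤ C)
    (hlim : ∀ x, Tendsto (fun n => G n x) atTop (𝓝 (g x))) (t : ℝ) (x : E) :
    Tendsto (fun n => heatSemigroup t (G n) x) atTop (𝓝 (heatSemigroup t g x)) :=
  tendsto_integral_of_dominated_convergence (fun _ => C)
    (fun n => (integrable_comp_add_smul_stdGaussian (hG n) (hC n) x _).aestronglyMeasurable)
    (integrable_const _) (fun n => Eventually.of_forall fun _ => hC n _)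
    (Eventually.of_forall fun _ => hlim _)

lemma continuous_uncurry_heatSemigroup {g : E → F} {C : ℝ} (hg : Continuous g)
    (hC : ∀ x, ‖g x‖ ≤ C) : Continuous fun p : ℝ × E => heatSemigroup p.1 g p.2 :=
  continuous_of_dominated (bound := fun _ => C)
    (fun p => (hg.stronglyMeasurable.comp_measurable (by fun_prop)).aestronglyMeasurable)
    (fun _ => Eventually.of_forall fun _ => hC _) (integrable_const _)
    (Eventually.of_forall fun _ => by fun_prop)

lemma continuous_heatSemigroup {g : E → F} {C : ℝ} (hg : Continuous g) (hC : ∀ x, ‖g x‖ ≤ C)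
    (t : ℝ) : Continuous (heatSemigroup t g) :=
  (continuous_uncurry_heatSemigroup hg hC).comp (Continuous.prodMk_right t)

lemma exists_forall_sub_heatSemigroup_le {f g : E → ℝ} {K : Set E}
    (hf : UpperSemicontinuousOn f K) (hK : IsCompact K) (hne : K.Nonempty) (hg : Continuous g)
    {C : ℝ} (hC : ∀ x, ‖g x‖ ≤ C) {T : ℝ} (hT : 0 ≤ T) (ε : ℝ) :
    ∃ t₀ ∈ Set.Icc 0 T, ∃ x₀ ∈ K, ∀ t ∈ Set.Icc 0 T, ∀ x ∈ K,
      f x - (heatSemigroup t g x + ε * t) ≤ f x₀ - (heatSemigroup t₀ g x₀ + ε * t₀) := by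
  have husc : UpperSemicontinuousOn
      (fun p : ℝ × E => f p.2 + -(heatSemigroup p.1 g p.2 + ε * p.1)) (Set.Icc 0 T ×ˢ K) := by
    refine (UpperSemicontinuousOn.comp hf continuousOn_snd fun p hp => hp.2).add
      (Continuous.continuousOn ?_).upperSemicontinuousOn
    have := continuous_uncurry_heatSemigroup hg hC
    fun_prop
  obtain ⟨⟨t₀, x₀⟩, hp, hmax⟩ := UpperSemicontinuousOn.exists_isMaxOn
    ((Set.nonempty_Icc.2 hT).prod hne) (isCompact_Icc.prod hK) husc
  exact ⟨t₀, hp.1, x₀, hp.2, fun t ht x hx => by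
    simpa only [sub_eq_add_neg, Set.mem_ofPred_eq] using hmax (Set.mk_mem_prod ht hx)⟩

lemma hasFDerivAt_heatSemigroup {g : E → F} (hg : ContDiff ℝ 1 g) (hc : HasCompactSupport g)
    (t : ℝ) (x : E) : HasFDerivAt (heatSemigroup t g) (heatSemigroup t (fderiv ℝ g) x) x := by
  have hdg : Continuous (fderiv ℝ g) := hg.continuous_fderiv one_ne_zero
  obtain ⟨D, hD⟩ := (hc.fderiv ℝ).exists_bound_of_continuous hdg
  have hint := fun y => integrable_comp_add_smul_stdGaussian_of_hasCompactSupport hg.continuous hc y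
    √t
  refine hasFDerivAt_integral_of_dominated_of_fderiv_le (bound := fun _ => D) univ_mem
    (Eventually.of_forall fun y => (hint y).aestronglyMeasurable) (hint x)
    (integrable_comp_add_smul_stdGaussian_of_hasCompactSupport hdg (hc.fderiv ℝ) x
      _).aestronglyMeasurable
    (Eventually.of_forall fun z y _ => hD (y + √t • z)) (integrable_const _)
    (Eventually.of_forall fun z y _ => ?_)
  exact (hasFDerivAt_comp_add_right (√t • z)).2 (hg.differentiable one_ne_zero (y + _)).hasFDerivAt

lemma fderiv_heatSemigroup_apply {g : E → F} (hg : ContDiff ℝ 1 g) (hc : HasCompactSupport g)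
    (t : ℝ) (x v : E) :
    fderiv ℝ (heatSemigroup t g) x v = heatSemigroup t (fun y => fderiv ℝ g y v) x := by
  rw [(hasFDerivAt_heatSemigroup hg hc t x).fderiv, heatSemigroup,
    ContinuousLinearMap.integral_apply (integrable_comp_add_smul_stdGaussian_of_hasCompactSupport
      (hg.continuous_fderiv one_ne_zero) (hc.fderiv ℝ) x _), heatSemigroup]

lemma contDiff_heatSemigroup {n : ℕ∞} {g : E → F} (hg : ContDiff ℝ n g)
    (hc : HasCompactSupport g) (t : ℝ) : ContDiff ℝ n (heatSemigroup t g) := by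
  have hconv : heatSemigroup t g = convolution (fun _ => (1 : ℝ)) g (ContinuousLinearMap.lsmul ℝ ℝ)
      ((stdGaussian E).map fun z => -(√t • z)) := by
    ext x
    have hcont : Continuous fun w => ContinuousLinearMap.lsmul ℝ ℝ (1 : ℝ) (g (x - w)) := by
      have := hg.continuous
      fun_prop
    rw [convolution, integral_map (by fun_prop) hcont.aestronglyMeasurable]
    simp [heatSemigroup]
  have : IsProbabilityMeasure ((stdGaussian E).map fun z => -(√t • z)) :=
    Measure.isProbabilityMeasure_map (by fun_prop)
  rw [hconv]
  exact hc.contDiff_convolution_right _ (integrable_const _).locallyIntegrable hg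

lemma hasDerivAt_heatSemigroup_left {g : E → F} (hg : ContDiff ℝ 1 g) (hc : HasCompactSupport g)
    (x : E) {t : ℝ} (ht : 0 < t) :
    HasDerivAt (fun t => heatSemigroup t g x)
      (∫ z, fderiv ℝ g (x + √t • z) ((1 / (2 * √t)) • z) ∂stdGaussian E) t := by
  have hdg : Continuous (fderiv ℝ g) := hg.continuous_fderiv one_ne_zero
  have hint := fun s => integrable_comp_add_smul_stdGaussian_of_hasCompactSupport hg.continuous hc x
    √s
  obtain ⟨D, hD⟩ := (hc.fderiv ℝ).exists_bound_of_continuous hdg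
  refine (hasDerivAt_integral_of_dominated_loc_of_deriv_le (x₀ := t) (s := Set.Ioi (t / 2))
    (F := fun s z => g (x + √s • z))
    (F' := fun s z => fderiv ℝ g (x + √s • z) ((1 / (2 * √s)) • z))
    (bound := fun z => D * (1 / (2 * √(t / 2)) * ‖z‖)) (Ioi_mem_nhds (by linarith))
    (Eventually.of_forall fun s => (hint s).aestronglyMeasurable) (hint t)
    (by fun_prop : Continuous _).aestronglyMeasurable
    (Eventually.of_forall fun z s (hs : t / 2 < s) => ?_) ?_
    (Eventually.of_forall fun z s (hs : t / 2 < s) => ?_)).2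
  · refine (ContinuousLinearMap.le_opNorm _ _).trans ?_
    have := hD (x + √s • z)
    have : 0 ≤ D := (norm_nonneg _).trans this
    have : 0 < √(t / 2) := Real.sqrt_pos.2 (by linarith)
    rw [norm_smul, Real.norm_of_nonneg (by positivity)]
    gcongr
  · simpa using (((integrable_norm_pow_stdGaussian (E := E) 1).const_mul _).const_mul D)
  · exact (hg.differentiable one_ne_zero _).hasFDerivAt.comp_hasDerivAt s
      (((Real.hasDerivAt_sqrt (by linarith)).smul_const z).const_add x)

lemma integrable_comp_add_smul_mul_inner_stdGaussian {h : E → ℝ} (hh : Continuous h)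
    (hc : HasCompactSupport h) (x e : E) (s : ℝ) :
    Integrable (fun z => h (x + s • z) * ⟪z, e⟫_ℝ) (stdGaussian E) := by
  obtain ⟨C, hC⟩ := hc.exists_bound_of_continuous hh
  refine Integrable.bdd_mul (c := C) ?_ (by fun_prop : Continuous _).aestronglyMeasurable
    (Eventually.of_forall fun _ => hC _)
  exact ((IsGaussian.memLp_id (stdGaussian E) 1 (by simp)).integrable le_rfl).inner_const e

lemma integral_comp_add_smul_mul_inner_stdGaussian {h : E → ℝ} (hh : ContDiff ℝ 1 h)
    (hc : HasCompactSupport h) (x e : E) (s : ℝ) :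
    ∫ z, h (x + s • z) * ⟪z, e⟫_ℝ ∂stdGaussian E =
      s * ∫ z, fderiv ℝ h (x + s • z) e ∂stdGaussian E := by
  have hderiv : ∀ z, HasFDerivAt (fun z => h (x + s • z)) (s • fderiv ℝ h (x + s • z)) z :=
    fun z => by
      refine ((hh.differentiable one_ne_zero _).hasFDerivAt.comp z
        (((hasFDerivAt_id z).const_smul s).const_add x)).congr_fderiv ?_
      ext w
      simp
  have hfderiv : (fun z => fderiv ℝ (fun z => h (x + s • z)) z e) =
      fun z => s * fderiv ℝ h (x + s • z) e := by
    ext z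
    simp [(hderiv z).fderiv]
  rw [integral_mul_inner_stdGaussian (fun z => (hderiv z).differentiableAt) e
    (integrable_comp_add_smul_stdGaussian_of_hasCompactSupport hh.continuous hc x s)
    (integrable_comp_add_smul_mul_inner_stdGaussian hh.continuous hc x e s), hfderiv,
    integral_const_mul]
  rw [hfderiv]
  exact (integrable_comp_add_smul_stdGaussian_of_hasCompactSupport
    ((hh.continuous_fderiv one_ne_zero).clm_apply continuous_const)
    (hc.fderiv_apply ℝ e) x s).const_mul s

end HeatSemigroup

section HeatEquation

lemma heatSemigroup_lap {g : 𝔼 → ℝ} (hg : ContDiff ℝ 2 g) (hc : HasCompactSupport g)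
    (t : ℝ) (x : 𝔼) : heatSemigroup t (lap g) x =
      ∑ i : Fin m, heatSemigroup t (fun y => secondDeriv g y (EuclideanSpace.single i 1)) x :=
  integral_finsetSum _ fun _ _ => integrable_comp_add_smul_stdGaussian_of_hasCompactSupport
    (continuous_secondDeriv hg _) (hasCompactSupport_secondDeriv hc _) x _

lemma lap_heatSemigroup {g : 𝔼 → ℝ} (hg : ContDiff ℝ 2 g) (hc : HasCompactSupport g)
    (t : ℝ) (x : 𝔼) : lap (heatSemigroup t g) x = heatSemigroup t (lap g) x := by
  rw [heatSemigroup_lap hg hc]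
  refine Finset.sum_congr rfl fun i _ => ?_
  have hdg : ContDiff ℝ 1 fun y => fderiv ℝ g y (EuclideanSpace.single i 1) :=
    (hg.fderiv_right (by norm_num)).clm_apply contDiff_const
  rw [secondDeriv, funext fun y => fderiv_heatSemigroup_apply (hg.of_le one_le_two) hc t y _,
    fderiv_heatSemigroup_apply hdg (hc.fderiv_apply ℝ _)]
  rfl

lemma hasDerivAt_heatSemigroup {g : 𝔼 → ℝ} (hg : ContDiff ℝ 2 g) (hc : HasCompactSupport g)
    (x : 𝔼) {t : ℝ} (ht : 0 < t) :
    HasDerivAt (fun t => heatSemigroup t g x) (1 / 2 * heatSemigroup t (lap g) x) t := by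
  have hdg : ∀ v, ContDiff ℝ 1 fun y => fderiv ℝ g y v := fun v =>
    (hg.fderiv_right (by norm_num)).clm_apply contDiff_const
  have hexpand : ∀ y z : 𝔼, fderiv ℝ g y ((1 / (2 * √t)) • z) = 1 / (2 * √t) * ∑ i,
      fderiv ℝ g y (EuclideanSpace.single i 1) * ⟪z, EuclideanSpace.single i 1⟫_ℝ := fun y z => by
    conv_lhs => rw [← (EuclideanSpace.basisFun (Fin m) ℝ).sum_repr z]
    simp [EuclideanSpace.inner_single_right, mul_comm]
  have hint : ∀ v, Integrable (fun z => fderiv ℝ g (x + √t • z) v * ⟪z, v⟫_ℝ) (stdGaussian 𝔼) :=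
    fun v => integrable_comp_add_smul_mul_inner_stdGaussian (hdg v).continuous
      (hc.fderiv_apply ℝ v) x v √t
  have : 0 < √t := Real.sqrt_pos.2 ht
  refine (hasDerivAt_heatSemigroup_left (hg.of_le one_le_two) hc x ht).congr_deriv ?_
  calc ∫ z, fderiv ℝ g (x + √t • z) ((1 / (2 * √t)) • z) ∂stdGaussian 𝔼
      = 1 / (2 * √t) * ∑ i, ∫ z, fderiv ℝ g (x + √t • z) (EuclideanSpace.single i 1) *
          ⟪z, EuclideanSpace.single i 1⟫_ℝ ∂stdGaussian 𝔼 := by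
        simp only [hexpand]
        rw [integral_const_mul, integral_finsetSum _ fun _ _ => hint _]
    _ = 1 / (2 * √t) * ∑ i, √t * heatSemigroup t
          (fun y => secondDeriv g y (EuclideanSpace.single i 1)) x := by
        simp only [fun i => integral_comp_add_smul_mul_inner_stdGaussian (hdg _)
          (hc.fderiv_apply ℝ (EuclideanSpace.single i (1 : ℝ))) x (EuclideanSpace.single i 1) (√t)]
        rfl
    _ = 1 / 2 * heatSemigroup t (lap g) x := by
        rw [heatSemigroup_lap hg hc, ← Finset.mul_sum]
        field_simp

lemma abs_heatSemigroup_sub_le {g : 𝔼 → ℝ} (hg : ContDiff ℝ 2 g) (hc : HasCompactSupport g)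
    {C : ℝ} (hC : ∀ x, |lap g x| ≤ C) (x : 𝔼) {t : ℝ} (ht : 0 ≤ t) :
    |heatSemigroup t g x - g x| ≤ C * t := by
  obtain rfl | ht := ht.eq_or_lt
  · simp
  obtain ⟨D, hD⟩ := hc.exists_bound_of_continuous hg.continuous
  have hcont : Continuous fun t => heatSemigroup t g x :=
    (continuous_uncurry_heatSemigroup hg.continuous hD).comp (.prodMk_left x)
  obtain ⟨s, -, hslope⟩ := exists_hasDerivAt_eq_slope (fun t => heatSemigroup t g x) _ ht
    hcont.continuousOn fun s hs => hasDerivAt_heatSemigroup hg hc x hs.1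
  have hbound : |heatSemigroup s (lap g) x| ≤ C := norm_heatSemigroup_le (F := ℝ) hC s x
  rw [heatSemigroup_zero, sub_zero, eq_div_iff ht.ne'] at hslope
  rw [← hslope, abs_mul, abs_mul, abs_of_pos ht, abs_of_pos one_half_pos]
  gcongr
  linarith [abs_nonneg (heatSemigroup s (lap g) x)]

lemma tendsto_heatSemigroup_slope {g : 𝔼 → ℝ} (hg : ContDiff ℝ 2 g) (hc : HasCompactSupport g)
    (x : 𝔼) :
    Tendsto (fun t => t⁻¹ * (heatSemigroup t g x - g x)) (𝓝[>] 0) (𝓝 (1 / 2 * lap g x)) := by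
  obtain ⟨C, hC⟩ := hc.exists_bound_of_continuous hg.continuous
  obtain ⟨D, hD⟩ := (hasCompactSupport_lap hc).exists_bound_of_continuous (continuous_lap hg)
  have hcont : Continuous fun t => heatSemigroup t g x :=
    (continuous_uncurry_heatSemigroup hg.continuous hC).comp (.prodMk_left x)
  have hcont_lap : Continuous fun t => heatSemigroup t (lap g) x :=
    (continuous_uncurry_heatSemigroup (continuous_lap hg) hD).comp (.prodMk_left x)
  have hderiv : Tendsto (deriv fun t => heatSemigroup t g x) (𝓝[>] 0) (𝓝 (1 / 2 * lap g x)) := by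
    have h := (hcont_lap.tendsto 0).const_mul (1 / 2 : ℝ)
    rw [heatSemigroup_zero] at h
    refine (h.mono_left nhdsWithin_le_nhds).congr' ?_
    filter_upwards [self_mem_nhdsWithin] with t ht
    exact (hasDerivAt_heatSemigroup hg hc x ht).deriv.symm
  have h := hasDerivWithinAt_Ici_of_tendsto_deriv (s := Set.Ioi 0)
    (fun t ht => (hasDerivAt_heatSemigroup hg hc x ht).differentiableAt.differentiableWithinAt)
    hcont.continuousWithinAt self_mem_nhdsWithin hderiv
  rw [hasDerivWithinAt_iff_tendsto_slope, Set.Ici_sdiff_left] at h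
  refine h.congr fun t => ?_
  simp [slope]

end HeatEquation

section ViscositySubharmonic

/-- Subharmonicity in the viscosity sense for real-valued functions: `f` is upper semicontinuous
and every `C²` function touching `f` from above has nonnegative Laplacian at the contact point. -/
structure IsViscositySubharmonicOn (f : 𝔼 → ℝ) (B : Set 𝔼) : Prop where
  upperSemicontinuousOn : UpperSemicontinuousOn f B
  lap_nonneg : ∀ x₀ ∈ B, ∀ φ : 𝔼 → ℝ, ContDiff ℝ 2 φ →
    IsLocalMax (fun x => f x - φ x) x₀ → 0 ≤ lap φ x₀

namespace IsViscositySubharmonicOn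

lemma sub_const {f : 𝔼 → ℝ} {B : Set 𝔼} (hf : IsViscositySubharmonicOn f B) (c : ℝ) :
    IsViscositySubharmonicOn (fun x => f x - c) B where
  upperSemicontinuousOn := by
    simpa only [sub_eq_add_neg] using
      hf.upperSemicontinuousOn.add continuousOn_const.upperSemicontinuousOn
  lap_nonneg x₀ hx₀ φ hφ hmax := by
    refine hf.lap_nonneg x₀ hx₀ φ hφ (hmax.mono fun x hx => ?_)
    linarith

lemma not_isMinOn_heatSemigroup {f : 𝔼 → ℝ} {B : Set 𝔼} (hf : IsViscositySubharmonicOn f B)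
    {g : 𝔼 → ℝ} (hg : ContDiff ℝ 2 g) (hc : HasCompactSupport g) {x₀ : 𝔼} (hx₀ : x₀ ∈ B) {t₀ ε : ℝ}
    (ht₀ : 0 < t₀) (hε : 0 < ε)
    (hmax : IsLocalMax (fun x => f x - heatSemigroup t₀ g x) x₀) :
    ¬ IsMinOn (fun t => heatSemigroup t g x₀ + ε * t) (Set.Icc 0 t₀) t₀ := by
  intro hmin
  have hspace : 0 ≤ heatSemigroup t₀ (lap g) x₀ := by
    rw [← lap_heatSemigroup hg hc]
    exact hf.lap_nonneg x₀ hx₀ _ (contDiff_heatSemigroup (n := 2) hg hc t₀) hmax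
  have hderiv : HasDerivAt (fun t => heatSemigroup t g x₀ + ε * t)
      (1 / 2 * heatSemigroup t₀ (lap g) x₀ + ε) t₀ := by
    simpa [Pi.add_def] using
      (hasDerivAt_heatSemigroup hg hc x₀ ht₀).add ((hasDerivAt_id t₀).const_mul ε)
  have htime := hmin.localize.hasFDerivWithinAt_nonneg hderiv.hasFDerivAt.hasFDerivWithinAt
    (y := 0 - t₀) (sub_mem_posTangentConeAt_of_segment_subset (by
      rw [segment_symm, segment_eq_Icc ht₀.le]))
  simp at htime
  nlinarith

/-- Parabolic maximum principle: a viscosity subharmonic function is a stationary subsolution of the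
heat equation. -/
lemma le_heatSemigroup_add {f : 𝔼 → ℝ} {B : Set 𝔼} (hf : IsViscositySubharmonicOn f B)
    {K : Set 𝔼} (hK : IsCompact K) (hKB : K ⊆ B) {g : 𝔼 → ℝ} (hg : ContDiff ℝ 2 g)
    (hc : HasCompactSupport g) {C T : ℝ}
    (hinit : ∀ x ∈ K, f x ≤ g x + C)
    (hbdry : ∀ x ∈ frontier K, ∀ t ∈ Set.Ioc 0 T, f x ≤ heatSemigroup t g x + C)
    {x : 𝔼} (hx : x ∈ K) {t : ℝ} (ht : t ∈ Set.Icc 0 T) : f x ≤ heatSemigroup t g x + C := by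
  by_contra! hlt
  obtain ⟨D, hD⟩ := hc.exists_bound_of_continuous hg.continuous
  obtain ⟨ε, hε, hεt⟩ := exists_pos_mul_lt (show 0 < f x - heatSemigroup t g x - C by linarith) t
  obtain ⟨t₀, ht₀, x₀, hx₀, hmax⟩ := exists_forall_sub_heatSemigroup_le
    (hf.upperSemicontinuousOn.mono hKB) hK ⟨x, hx⟩ hg.continuous hD (ht.1.trans ht.2) ε
  have hpos : heatSemigroup t₀ g x₀ + C + ε * t₀ < f x₀ := by linarith [hmax t ht x hx]
  have ht₀_pos : 0 < t₀ := by
    refine ht₀.1.lt_of_ne fun h => ?_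
    rw [← h, heatSemigroup_zero] at hpos
    linarith [hinit x₀ hx₀]
  have hx₀_int : x₀ ∈ interior K := by
    by_contra h
    have := hbdry x₀ ⟨subset_closure hx₀, h⟩ t₀ ⟨ht₀_pos, ht₀.2⟩
    nlinarith
  refine hf.not_isMinOn_heatSemigroup hg hc (hKB hx₀) ht₀_pos hε ?_ fun s hs => ?_
  · filter_upwards [mem_interior_iff_mem_nhds.1 hx₀_int] with y hy
    linarith [hmax t₀ ht₀ y hy]
  · have := hmax s ⟨hs.1, hs.2.trans ht₀.2⟩ x₀ hx₀
    simp only [Set.mem_ofPred_eq]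
    linarith

end IsViscositySubharmonicOn

end ViscositySubharmonic

section SupConvolution

variable {X : Type*} [PseudoMetricSpace X] {g : X → ℝ} {M : ℝ}

/-- The Lipschitz regularization from above of a function bounded above; it decreases to the upper
semicontinuous envelope as `L → ∞`. -/
def supConvolution (L : ℝ) (g : X → ℝ) (x : X) : ℝ := ⨆ y, (g y - L * dist x y)

lemma bddAbove_range_sub_mul_dist (hM : ∀ x, g x ≤ M) {L : ℝ} (hL : 0 ≤ L) (x : X) :
    BddAbove (Set.range fun y => g y - L * dist x y) :=
  ⟨M, by
    rintro _ ⟨y, rfl⟩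
    exact (sub_le_self _ (mul_nonneg hL dist_nonneg)).trans (hM y)⟩

lemma le_supConvolution (hM : ∀ x, g x ≤ M) {L : ℝ} (hL : 0 ≤ L) (x : X) :
    g x ≤ supConvolution L g x := by
  simpa [supConvolution] using le_ciSup (bddAbove_range_sub_mul_dist hM hL x) x

lemma supConvolution_le (hM : ∀ x, g x ≤ M) {L : ℝ} (hL : 0 ≤ L) (x : X) :
    supConvolution L g x ≤ M :=
  have : Nonempty X := ⟨x⟩
  ciSup_le fun y => (sub_le_self _ (mul_nonneg hL dist_nonneg)).trans (hM y)

lemma lipschitzWith_supConvolution (hM : ∀ x, g x ≤ M) (L : NNReal) :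
    LipschitzWith L (supConvolution L g) := by
  refine .of_le_add_mul L fun x y => ?_
  have : Nonempty X := ⟨x⟩
  refine ciSup_le fun w => ?_
  have hw : g w - L * dist y w ≤ supConvolution L g y :=
    le_ciSup (bddAbove_range_sub_mul_dist hM L.coe_nonneg y) w
  have htri : L * dist y w ≤ L * (dist x y + dist x w) := by
    gcongr
    exact dist_triangle_left _ _ _
  linarith

lemma tendsto_supConvolution {N : ℝ} (hM : ∀ x, g x ≤ M) (hN : ∀ x, -N ≤ g x) {x : X}
    (hg : UpperSemicontinuousAt g x) :
    Tendsto (fun L => supConvolution L g x) atTop (𝓝 (g x)) := by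
  refine tendsto_order.2 ⟨fun a ha => ?_, fun a ha => ?_⟩
  · filter_upwards [eventually_ge_atTop 0] with L hL
    exact ha.trans_le (le_supConvolution hM hL x)
  obtain ⟨b, hgb, hba⟩ := exists_between ha
  obtain ⟨δ, hδ, hball⟩ := Metric.eventually_nhds_iff.1 (hg b hgb)
  filter_upwards [eventually_ge_atTop 0, eventually_ge_atTop ((M + N) / δ)] with L hL hLδ
  have : Nonempty X := ⟨x⟩
  refine (ciSup_le fun y => ?_).trans_lt hba
  rcases lt_or_ge (dist y x) δ with hy | hy
  · exact (sub_le_self _ (mul_nonneg hL dist_nonneg)).trans (hball hy).le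
  · rw [div_le_iff₀ hδ] at hLδ
    have : L * δ ≤ L * dist x y := by
      rw [dist_comm]
      gcongr
    linarith [hM y, hN x]

end SupConvolution

lemma exists_contDiff_tendsto_of_upperSemicontinuous {E : Type*} [NormedAddCommGroup E]
    [NormedSpace ℝ E] [FiniteDimensional ℝ E] {g : E → ℝ} {N : ℝ} (hg : UpperSemicontinuous g)
    (hc : HasCompactSupport g) (hN : ∀ x, -N ≤ g x) (hg0 : ∀ x, g x ≤ 0) (k : ℕ∞) :
    ∃ G : ℕ → E → ℝ, (∀ n, ContDiff ℝ k (G n)) ∧ (∀ n, HasCompactSupport (G n)) ∧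
      (∀ n x, |G n x| ≤ N + 1) ∧ (∀ n x, g x ≤ G n x + 1 / (n + 1)) ∧
      ∀ x, Tendsto (fun n => G n x) atTop (𝓝 (g x)) := by
  have hconv : ∀ (n : ℕ) x, g x ≤ supConvolution n g x := fun n x =>
    le_supConvolution hg0 n.cast_nonneg x
  have hconv0 : ∀ (n : ℕ) x, supConvolution n g x ≤ 0 := fun n x =>
    supConvolution_le hg0 n.cast_nonneg x
  have hpos : ∀ n : ℕ, 0 < 1 / ((n : ℝ) + 1) := fun n => Nat.one_div_pos_of_nat
  choose G hG hdist hsupp using fun n : ℕ =>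
    (lipschitzWith_supConvolution hg0 n).continuous.exists_contDiff_approx k
      continuous_const fun _ => hpos n
  simp only [Real.dist_eq, NNReal.coe_natCast] at hdist hsupp
  refine ⟨G, hG, fun n => hc.mono ((hsupp n).trans fun x hx => ?_), fun n x => ?_, fun n x => ?_,
    fun x => ?_⟩
  · exact fun h => hx ((hconv0 n x).antisymm (h.ge.trans (hconv n x)))
  · have hle : 1 / ((n : ℝ) + 1) ≤ 1 := by
      rw [div_le_one (by positivity)]
      linarith [n.cast_nonneg (α := ℝ)]
    have := abs_lt.1 (hdist n x)
    rw [abs_le]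
    constructor <;> linarith [hconv n x, hconv0 n x, hN x]
  · linarith [(abs_lt.1 (hdist n x)).1, hconv n x]
  · have herr : Tendsto (fun n => G n x - supConvolution n g x) atTop (𝓝 0) :=
      squeeze_zero_norm (fun n => (hdist n x).le) tendsto_one_div_add_atTop_nhds_zero_nat
    simpa using herr.add
      ((tendsto_supConvolution hg0 hN (hg x)).comp tendsto_natCast_atTop_atTop)

lemma upperSemicontinuous_indicator {X : Type*} [TopologicalSpace X]
    {f : X → ℝ} {U : Set X} (hf : UpperSemicontinuousOn f U) (hU : IsOpen U)
    (h0 : ∀ x ∈ U, f x ≤ 0) : UpperSemicontinuous (U.indicator f) := by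
  intro x c hc
  by_cases hx : x ∈ U
  · rw [Set.indicator_of_mem hx] at hc
    have h := hf x hx c hc
    rw [hU.nhdsWithin_eq hx] at h
    filter_upwards [h, hU.mem_nhds hx] with y hyc hyU
    rwa [Set.indicator_of_mem hyU]
  · rw [Set.indicator_of_notMem hx] at hc
    exact Eventually.of_forall fun y => (Set.indicator_nonpos h0 y).trans_lt hc

lemma norm_indicator_le_of_mem_Icc {X : Type*} {f : X → ℝ} {U : Set X} {N : ℝ} (hN : 0 ≤ N)
    (hf : ∀ x ∈ U, f x ∈ Set.Icc (-N) 0) (x : X) : ‖U.indicator f x‖ ≤ N := by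
  by_cases hx : x ∈ U
  · rw [Set.indicator_of_mem hx, Real.norm_eq_abs, abs_le]
    exact ⟨(hf x hx).1, (hf x hx).2.trans hN⟩
  · simpa [hx]

lemma integrable_indicator_of_upperSemicontinuousOn {X : Type*} [TopologicalSpace X]
    [MeasurableSpace X] [BorelSpace X] {μ : Measure X} {f : X → ℝ} {U : Set X} {N : ℝ}
    (hf : UpperSemicontinuousOn f U) (hU : IsOpen U) (hμU : μ U ≠ ⊤) (hN : 0 ≤ N)
    (hfU : ∀ x ∈ U, f x ∈ Set.Icc (-N) 0) : Integrable (U.indicator f) μ :=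
  (Measure.integrableOn_of_bounded hμU
    (upperSemicontinuous_indicator hf hU fun x hx => (hfU x hx).2).measurable.aestronglyMeasurable
    (Eventually.of_forall
      (norm_indicator_le_of_mem_Icc hN hfU))).integrable_of_forall_notMem_eq_zero
      fun _ hx => Set.indicator_of_notMem hx f

lemma IsViscositySubharmonicOn.le_heatSemigroup_indicator_add {f : 𝔼 → ℝ} {B : Set 𝔼}
    (hf : IsViscositySubharmonicOn f B) {K U : Set 𝔼} (hK : IsCompact K) (hKB : K ⊆ B)
    (hU : IsOpen U) (hUK : U ⊆ K) {N C T : ℝ} (hC : 0 ≤ C) (hN : ∀ x ∈ K, -N ≤ f x)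
    (h0 : ∀ x ∈ K, f x ≤ 0)
    (hbdry : ∀ x ∈ frontier K, ∀ t ∈ Set.Ioc 0 T, -C ≤ heatSemigroup t (U.indicator f) x)
    {x : 𝔼} (hx : x ∈ K) {t : ℝ} (ht : t ∈ Set.Icc 0 T) :
    f x ≤ heatSemigroup t (U.indicator f) x + C := by
  set g := U.indicator f
  have hN0 : 0 ≤ N := by linarith [hN x hx, h0 x hx]
  have hg : UpperSemicontinuous g := upperSemicontinuous_indicator
    (hf.upperSemicontinuousOn.mono (hUK.trans hKB)) hU fun x hx => h0 x (hUK hx)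
  have hg0 : ∀ x, g x ≤ 0 := Set.indicator_nonpos fun x hx => h0 x (hUK hx)
  have hgN : ∀ x, -N ≤ g x := fun x => Set.le_indicator_apply (fun hx => hN x (hUK hx))
    fun _ => by linarith
  have hfg : ∀ x ∈ K, f x ≤ g x := fun x hx => Set.le_indicator_apply (fun _ => le_rfl)
    fun _ => h0 x hx
  obtain ⟨G, hG, hGc, hGb, hgG, hGg⟩ := exists_contDiff_tendsto_of_upperSemicontinuous hg
    (.of_support_subset_isCompact hK (Set.support_indicator_subset.trans hUK)) hgN hg0 2
  have hgb : ∀ x, ‖g x‖ ≤ N := fun x => abs_le.2 ⟨hgN x, (hg0 x).trans hN0⟩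
  have hGm := fun n => (hG n).continuous.stronglyMeasurable
  have hle : ∀ n : ℕ, f x ≤ heatSemigroup t (G n) x + (C + 1 / (n + 1)) := fun n =>
    hf.le_heatSemigroup_add hK hKB (hG n) (hGc n)
      (fun y hy => by linarith [hfg y hy, hgG n y])
      (fun y hy s hs => by
        linarith [hbdry y hy s hs, h0 y (hK.isClosed.frontier_subset hy),
          heatSemigroup_le_add_const hg.measurable.stronglyMeasurable hgb (hGm n) (hGb n) (hgG n)
            s y]) hx ht
  have hlim : Tendsto (fun n : ℕ => heatSemigroup t (G n) x + (C + 1 / ((n : ℝ) + 1))) atTop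
      (𝓝 (heatSemigroup t g x + (C + 0))) :=
    (tendsto_heatSemigroup hGm hGb hGg t x).add
      (tendsto_const_nhds.add tendsto_one_div_add_atTop_nhds_zero_nat)
  rw [add_zero] at hlim
  exact ge_of_tendsto' hlim hle

section SelfAdjoint

variable {E : Type*} [NormedAddCommGroup E] [InnerProductSpace ℝ E] [FiniteDimensional ℝ E]
  [MeasurableSpace E] [BorelSpace E]

lemma integral_comp_neg_stdGaussian (F : E → ℝ) :
    ∫ z, F (-z) ∂stdGaussian E = ∫ z, F z ∂stdGaussian E := by
  rw [integral_stdGaussian_eq, integral_stdGaussian_eq, ← integral_neg_eq_self]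
  simp [gaussianDensity]

lemma integral_mul_heatSemigroup_comm {φ g : E → ℝ} {C : ℝ} (hφ : Continuous φ)
    (hc : HasCompactSupport φ) (hg : StronglyMeasurable g) (hgi : Integrable g)
    (hgC : ∀ x, ‖g x‖ ≤ C) (t : ℝ) :
    ∫ x, φ x * heatSemigroup t g x = ∫ x, g x * heatSemigroup t φ x := by
  obtain ⟨D, hD⟩ := hc.exists_bound_of_continuous hφ
  have hint : Integrable (fun p : E × E => φ p.1 * g (p.1 + √t • p.2))
      (volume.prod (stdGaussian E)) :=
    ((hφ.integrable_of_hasCompactSupport hc).comp_fst _).mul_bdd (c := C)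
      (hg.comp_measurable (by fun_prop)).aestronglyMeasurable (Eventually.of_forall fun p => hgC _)
  have hint' : Integrable (fun p : E × E => g p.1 * φ (p.1 + √t • -p.2))
      (volume.prod (stdGaussian E)) :=
    (hgi.comp_fst _).mul_bdd (c := D) (by fun_prop) (Eventually.of_forall fun p => hD _)
  calc ∫ x, φ x * heatSemigroup t g x
      = ∫ x, ∫ z, φ x * g (x + √t • z) ∂stdGaussian E := by
        simp only [heatSemigroup, integral_const_mul]
    _ = ∫ z, (∫ x, φ x * g (x + √t • z)) ∂stdGaussian E := integral_integral_swap hint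
    _ = ∫ z, (∫ x, g x * φ (x + √t • -z)) ∂stdGaussian E := by
        refine integral_congr_ae (Eventually.of_forall fun z => ?_)
        dsimp only
        rw [← integral_add_right_eq_self (fun x => g x * φ (x + √t • -z)) (√t • z)]
        simp [mul_comm]
    _ = ∫ x, ∫ z, g x * φ (x + √t • -z) ∂stdGaussian E := (integral_integral_swap hint').symm
    _ = ∫ x, g x * heatSemigroup t φ x := by
        simp only [integral_const_mul, heatSemigroup,
          fun x => integral_comp_neg_stdGaussian fun z => φ (x + √t • z)]

lemma stronglyMeasurable_heatSemigroup {g : E → ℝ} (hg : StronglyMeasurable g) (t : ℝ) :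
    StronglyMeasurable (heatSemigroup t g) :=
  StronglyMeasurable.integral_prod_right' (f := fun p : E × E => g (p.1 + √t • p.2))
    (hg.comp_measurable (by fun_prop))

lemma norm_heatSemigroup_le_of_eq_zero_on_ball {g : E → ℝ} {x : E} {N r t : ℝ}
    (hN : ∀ y, ‖g y‖ ≤ N) (hr : 0 < r) (hg : ∀ y ∈ ball x r, g y = 0) (ht : 0 ≤ t) :
    ‖heatSemigroup t g x‖ ≤ N / r ^ 4 * (∫ z : E, ‖z‖ ^ 4 ∂stdGaussian E) * t ^ 2 := by
  have hN0 : 0 ≤ N := (norm_nonneg _).trans (hN x)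
  have hpt : ∀ z : E, ‖g (x + √t • z)‖ ≤ N / r ^ 4 * t ^ 2 * ‖z‖ ^ 4 := fun z => by
    by_cases hz : x + √t • z ∈ ball x r
    · rw [hg _ hz, norm_zero]
      positivity
    have hrz : r ≤ √t * ‖z‖ := by
      simpa [norm_smul, Real.norm_of_nonneg (Real.sqrt_nonneg t)] using hz
    have hrz4 : r ^ 4 ≤ t ^ 2 * ‖z‖ ^ 4 := by
      calc r ^ 4 ≤ (√t * ‖z‖) ^ 4 := by gcongr
        _ = (√t ^ 2) ^ 2 * ‖z‖ ^ 4 := by ring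
        _ = t ^ 2 * ‖z‖ ^ 4 := by rw [Real.sq_sqrt ht]
    calc ‖g (x + √t • z)‖ ≤ N / r ^ 4 * r ^ 4 := by
          rw [div_mul_cancel₀ _ (by positivity)]
          exact hN _
      _ ≤ N / r ^ 4 * (t ^ 2 * ‖z‖ ^ 4) := by gcongr
      _ = N / r ^ 4 * t ^ 2 * ‖z‖ ^ 4 := by ring
  calc ‖heatSemigroup t g x‖ ≤ ∫ z : E, N / r ^ 4 * t ^ 2 * ‖z‖ ^ 4 ∂stdGaussian E :=
        norm_integral_le_of_norm_le ((integrable_norm_pow_stdGaussian 4).const_mul _)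
          (Eventually.of_forall hpt)
    _ = N / r ^ 4 * (∫ z : E, ‖z‖ ^ 4 ∂stdGaussian E) * t ^ 2 := by
        rw [integral_const_mul]
        ring

end SelfAdjoint

section WeakGenerator

lemma tendsto_integral_heatSemigroup_slope {φ g : 𝔼 → ℝ} {N : ℝ} (hφ : ContDiff ℝ 2 φ)
    (hc : HasCompactSupport φ) (hg : StronglyMeasurable g) (hgi : Integrable g)
    (hN : ∀ x, ‖g x‖ ≤ N) :
    Tendsto (fun t => t⁻¹ * ((∫ x, φ x * heatSemigroup t g x) - ∫ x, φ x * g x)) (𝓝[>] 0)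
      (𝓝 (1 / 2 * ∫ x, g x * lap φ x)) := by
  obtain ⟨C, hC⟩ := hc.exists_bound_of_continuous hφ.continuous
  obtain ⟨D, hD⟩ := (hasCompactSupport_lap hc).exists_bound_of_continuous (continuous_lap hφ)
  have hPφ := continuous_heatSemigroup hφ.continuous hC
  have hint : ∀ {ψ : 𝔼 → ℝ}, Continuous ψ → (∀ x, ‖ψ x‖ ≤ C) → Integrable fun x => g x * ψ x :=
    fun hψ hb => hgi.mul_bdd hψ.aestronglyMeasurable (Eventually.of_forall hb)
  have hslope : ∀ t, ∫ x, g x * (t⁻¹ * (heatSemigroup t φ x - φ x)) =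
      t⁻¹ * ((∫ x, φ x * heatSemigroup t g x) - ∫ x, φ x * g x) := fun t => by
    rw [integral_mul_heatSemigroup_comm hφ.continuous hc hg hgi hN]
    simp only [mul_comm (φ _)]
    rw [← integral_sub (hint (hPφ t) (norm_heatSemigroup_le hC t)) (hint hφ.continuous hC),
      ← integral_const_mul]
    congr! 2
    ring
  have hlim : 1 / 2 * ∫ x, g x * lap φ x = ∫ x, g x * (1 / 2 * lap φ x) := by
    simp only [← integral_const_mul, mul_left_comm]
  simp only [← hslope, hlim]
  refine tendsto_integral_filter_of_dominated_convergence (fun x => ‖g x‖ * D)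
    (Eventually.of_forall fun t => hgi.aestronglyMeasurable.mul
      (((hPφ t).sub hφ.continuous).const_mul t⁻¹).aestronglyMeasurable) ?_
    (hgi.norm.mul_const _)
    (Eventually.of_forall fun x => (tendsto_heatSemigroup_slope hφ hc x).const_mul _)
  filter_upwards [self_mem_nhdsWithin] with t (ht : 0 < t)
  refine Eventually.of_forall fun x => ?_
  rw [norm_mul, norm_mul, norm_inv, Real.norm_of_nonneg ht.le]
  gcongr
  rw [inv_mul_le_iff₀ ht, mul_comm]
  exact abs_heatSemigroup_sub_le hφ hc hD x ht.le

lemma integral_mul_lap_nonneg_of_le_heatSemigroup {φ g : 𝔼 → ℝ} {N C : ℝ} (hφ : ContDiff ℝ 2 φ)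
    (hc : HasCompactSupport φ) (hφ0 : ∀ x, 0 ≤ φ x) (hg : StronglyMeasurable g)
    (hgi : Integrable g) (hN : ∀ x, ‖g x‖ ≤ N)
    (hle : ∀ t > 0, ∀ x ∈ tsupport φ, g x ≤ heatSemigroup t g x + C * t ^ 2) :
    0 ≤ ∫ x, g x * lap φ x := by
  have hφi : Integrable φ := hφ.continuous.integrable_of_hasCompactSupport hc
  have hint : ∀ {ψ : 𝔼 → ℝ}, StronglyMeasurable ψ → (∀ x, ‖ψ x‖ ≤ N) →
      Integrable fun x => φ x * ψ x :=
    fun hψ hb => hφi.mul_bdd hψ.aestronglyMeasurable (Eventually.of_forall hb)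
  have hlower : ∀ t > 0, -(C * ∫ x, φ x) * t ≤
      t⁻¹ * ((∫ x, φ x * heatSemigroup t g x) - ∫ x, φ x * g x) := fun t ht => by
    have hPt := hint (stronglyMeasurable_heatSemigroup hg t) (norm_heatSemigroup_le hN t)
    have h : ∫ x, φ x * g x ≤ ∫ x, (φ x * heatSemigroup t g x + φ x * (C * t ^ 2)) := by
      refine integral_mono (hint hg hN) (hPt.add (hφi.mul_const _)) fun x => ?_
      dsimp only
      by_cases hx : x ∈ tsupport φ
      · rw [← mul_add]
        exact mul_le_mul_of_nonneg_left (hle t ht x hx) (hφ0 x)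
      · simp [image_eq_zero_of_notMem_tsupport hx]
    rw [integral_add hPt (hφi.mul_const _), integral_mul_const] at h
    rw [le_inv_mul_iff₀ ht]
    linarith
  have hzero : Tendsto (fun t => -(C * ∫ x, φ x) * t) (𝓝[>] 0) (𝓝 0) := by
    simpa using tendsto_nhdsWithin_of_tendsto_nhds
      ((continuous_const_mul (-(C * ∫ x, φ x))).tendsto 0)
  have h := le_of_tendsto_of_tendsto hzero
    (tendsto_integral_heatSemigroup_slope hφ hc hg hgi hN)
    (eventually_nhdsWithin_of_forall hlower)
  linarith

end WeakGenerator

namespace IsViscositySubharmonicOn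

lemma le_heatSemigroup_indicator_add_sq {f : 𝔼 → ℝ} {B : Set 𝔼} (hf : IsViscositySubharmonicOn f B)
    {K U : Set 𝔼} (hK : IsCompact K) (hKB : K ⊆ B) (hU : IsOpen U) {δ N : ℝ} (hδ : 0 < δ)
    (hUK : thickening δ U ⊆ K) (hN : ∀ x ∈ K, -N ≤ f x) (h0 : ∀ x ∈ K, f x ≤ 0) {x : 𝔼}
    (hx : x ∈ K) {t : ℝ} (ht : 0 ≤ t) :
    f x ≤ heatSemigroup t (U.indicator f) x +
      N / δ ^ 4 * (∫ z : 𝔼, ‖z‖ ^ 4 ∂stdGaussian 𝔼) * t ^ 2 := by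
  have hN0 : 0 ≤ N := by linarith [hN x hx, h0 x hx]
  have hUK' : U ⊆ K := (self_subset_thickening hδ U).trans hUK
  have : 0 ≤ ∫ z : 𝔼, ‖z‖ ^ 4 ∂stdGaussian 𝔼 := integral_nonneg fun z => by positivity
  have hb := norm_indicator_le_of_mem_Icc hN0 fun y hy => ⟨hN y (hUK' hy), h0 y (hUK' hy)⟩
  refine hf.le_heatSemigroup_indicator_add hK hKB hU hUK' (by positivity) hN h0
    (fun y hy s hs => ?_) hx (Set.right_mem_Icc.2 ht)
  have hfar : ∀ w ∈ ball y δ, U.indicator f w = 0 := fun w hw =>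
    Set.indicator_of_notMem (fun hwU => hy.2 (interior_mono hUK
      (isOpen_thickening.interior_eq.ge
        (mem_thickening_iff.2 ⟨w, hwU, by rwa [dist_comm]⟩)))) f
  have hsmall := norm_heatSemigroup_le_of_eq_zero_on_ball hb hδ hfar hs.1.le
  have hmono : N / δ ^ 4 * (∫ z : 𝔼, ‖z‖ ^ 4 ∂stdGaussian 𝔼) * s ^ 2 ≤
      N / δ ^ 4 * (∫ z : 𝔼, ‖z‖ ^ 4 ∂stdGaussian 𝔼) * t ^ 2 := by
    gcongr
    exacts [hs.1.le, hs.2]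
  exact (neg_le_neg hmono).trans (abs_le.1 hsmall).1

lemma integral_mul_lap_nonneg_of_mem_Icc {f : 𝔼 → ℝ} {B : Set 𝔼}
    (hf : IsViscositySubharmonicOn f B) {K U : Set 𝔼} (hK : IsCompact K) (hKB : K ⊆ B)
    (hU : IsOpen U) {δ N M : ℝ} (hδ : 0 < δ) (hUK : thickening δ U ⊆ K)
    (hfK : ∀ x ∈ K, f x ∈ Set.Icc (-N) M) {φ : 𝔼 → ℝ} (hφ : ContDiff ℝ 2 φ)
    (hc : HasCompactSupport φ) (hφU : tsupport φ ⊆ U) (hφ0 : ∀ x, 0 ≤ φ x) :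
    0 ≤ ∫ x, f x * lap φ x := by
  have hUK' : U ⊆ K := (self_subset_thickening hδ U).trans hUK
  have hM : ∀ x ∈ K, f x - M ≤ 0 := fun x hx => sub_nonpos.2 (hfK x hx).2
  have hN : ∀ x ∈ K, -(N + M) ≤ f x - M := fun x hx => by linarith [(hfK x hx).1]
  have hfM := hf.sub_const M
  have hfM_usc := hfM.upperSemicontinuousOn.mono (hUK'.trans hKB)
  have hfM_mem : ∀ x ∈ U, f x - M ∈ Set.Icc (-|N + M|) 0 := fun x hx =>
    ⟨(neg_le_neg (le_abs_self _)).trans (hN x (hUK' hx)), hM x (hUK' hx)⟩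
  set g := U.indicator fun x => f x - M
  have hg : Measurable g :=
    (upperSemicontinuous_indicator hfM_usc hU fun x hx => (hfM_mem x hx).2).measurable
  have hgb : ∀ x, ‖g x‖ ≤ |N + M| := norm_indicator_le_of_mem_Icc (abs_nonneg _) hfM_mem
  have hgi : Integrable g := integrable_indicator_of_upperSemicontinuousOn hfM_usc hU
    (measure_ne_top_of_subset hUK' hK.measure_lt_top.ne) (abs_nonneg _) hfM_mem
  have hpos := integral_mul_lap_nonneg_of_le_heatSemigroup hφ hc hφ0 hg.stronglyMeasurable hgi hgb
    fun t ht x hx => by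
      rw [show g x = f x - M from Set.indicator_of_mem (hφU hx) _]
      exact hfM.le_heatSemigroup_indicator_add_sq hK hKB hU hδ hUK hN hM (hUK' (hφU hx)) ht.le
  have hfg : ∀ x, f x * lap φ x = g x * lap φ x + M * lap φ x := fun x => by
    by_cases hx : x ∈ tsupport φ
    · rw [show g x = f x - M from Set.indicator_of_mem (hφU hx) _]
      ring
    · simp [lap_eq_zero_of_notMem_tsupport hx]
  obtain ⟨D, hD⟩ := (hasCompactSupport_lap hc).exists_bound_of_continuous (continuous_lap hφ)
  have hlap : Integrable (lap φ) :=
    (continuous_lap hφ).integrable_of_hasCompactSupport (hasCompactSupport_lap hc)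
  simp only [hfg]
  rwa [integral_add (hgi.mul_bdd (continuous_lap hφ).aestronglyMeasurable
    (Eventually.of_forall hD)) (hlap.const_mul M), integral_const_mul, integral_lap_eq_zero hφ hc,
    mul_zero, add_zero]

theorem integral_mul_lap_nonneg {f : 𝔼 → ℝ} {B : Set 𝔼} (hf : IsViscositySubharmonicOn f B)
    (hB : IsOpen B) {N : ℝ} (hN : ∀ x ∈ B, -N ≤ f x) {φ : 𝔼 → ℝ} (hφ : ContDiff ℝ 2 φ)
    (hc : HasCompactSupport φ) (hs : tsupport φ ⊆ B) (hφ0 : ∀ x, 0 ≤ φ x) :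
    0 ≤ ∫ x, f x * lap φ x := by
  obtain ⟨δ, hδ, hδB⟩ := hc.exists_cthickening_subset_open hB hs
  have hK : IsCompact (cthickening δ (tsupport φ)) := hc.cthickening
  obtain ⟨M, hM⟩ := (hf.upperSemicontinuousOn.mono hδB).bddAbove_of_isCompact hK
  exact hf.integral_mul_lap_nonneg_of_mem_Icc hK hδB isOpen_thickening (half_pos hδ)
    ((thickening_thickening_subset _ _ _).trans
      ((add_halves δ).symm ▸ thickening_subset_cthickening δ (tsupport φ)))
    (fun x hx => ⟨hN x (hδB hx), hM (Set.mem_image_of_mem f hx)⟩) hφ hc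
    (self_subset_thickening (half_pos hδ) _) hφ0

end IsViscositySubharmonicOn

section HeatKernel

variable {E : Type*} [NormedAddCommGroup E] [InnerProductSpace ℝ E]

/-- The density of `√s • Z` for a standard Gaussian vector `Z`, that is, the kernel of
`heatSemigroup s` for `0 < s`. -/
def heatKernel (s : ℝ) (w : E) : ℝ :=
  (√s ^ Module.finrank ℝ E)⁻¹ * gaussianDensity ((√s)⁻¹ • w)

lemma heatKernel_nonneg (s : ℝ) (w : E) : 0 ≤ heatKernel s w :=
  mul_nonneg (by positivity) (gaussianDensity_pos _).le

lemma heatKernel_le_of_norm_le (s : ℝ) {z w : E} (h : ‖w‖ ≤ ‖z‖) :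
    heatKernel s z ≤ heatKernel s w := by
  unfold heatKernel
  gcongr
  refine gaussianDensity_le_of_norm_le ?_
  rw [norm_smul, norm_smul]
  gcongr

@[fun_prop]
lemma continuous_heatKernel (s : ℝ) : Continuous (heatKernel s : E → ℝ) := by
  unfold heatKernel
  fun_prop

lemma heatKernel_eq (s : ℝ) (w : E) :
    heatKernel s w = (2 * Real.pi) ^ (-(Module.finrank ℝ E / 2 : ℝ)) *
      ((√s ^ Module.finrank ℝ E)⁻¹ * Real.exp (-(1 / 2) * ((√s)⁻¹ * ‖w‖) ^ 2)) := by
  rw [heatKernel, gaussianDensity, norm_smul, Real.norm_of_nonneg (by positivity)]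
  ring

lemma pow_mul_exp_neg_le (n : ℕ) {r : ℝ} (hr : 1 ≤ r) :
    r ^ n * Real.exp (-9 * (n + 1) * r ^ 2) ≤ Real.exp (-(n + 1)) / 2 := by
  have hpow : r ^ n ≤ Real.exp (n * (r - 1)) := by
    rw [Real.exp_nat_mul]
    gcongr
    linarith [Real.add_one_le_exp (r - 1)]
  have hexp : Real.exp (-1) ≤ 1 / 2 := by
    rw [Real.exp_neg, inv_le_comm₀ (Real.exp_pos _) (by norm_num)]
    linarith [Real.add_one_le_exp (1 : ℝ)]
  have hexponent : n * (r - 1) + -9 * (n + 1) * r ^ 2 ≤ -1 + -((n : ℝ) + 1) := by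
    have hn : (0 : ℝ) ≤ n := Nat.cast_nonneg n
    have hsq : r ≤ r ^ 2 := by nlinarith
    nlinarith [mul_le_mul_of_nonneg_left hsq hn, mul_le_mul_of_nonneg_left hr hn]
  calc r ^ n * Real.exp (-9 * (n + 1) * r ^ 2)
      ≤ Real.exp (n * (r - 1)) * Real.exp (-9 * (n + 1) * r ^ 2) := by gcongr
    _ ≤ Real.exp (-1) * Real.exp (-(n + 1)) := by
        rw [← Real.exp_add, ← Real.exp_add]
        exact Real.exp_le_exp.2 hexponent
    _ ≤ 1 / 2 * Real.exp (-(n + 1)) := by gcongr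
    _ = Real.exp (-(n + 1)) / 2 := by ring

lemma le_heatKernel_of_norm_le {ρ T : ℝ} (hT : 0 < T)
    (hTρ : 2 * (Module.finrank ℝ E + 1) * T = ρ ^ 2) {w : E} (hw : ‖w‖ ≤ ρ) :
    (2 * Real.pi) ^ (-(Module.finrank ℝ E / 2 : ℝ)) *
      ((√T ^ Module.finrank ℝ E)⁻¹ * Real.exp (-(Module.finrank ℝ E + 1))) ≤ heatKernel T w := by
  rw [heatKernel_eq]
  gcongr
  have : ‖w‖ ^ 2 ≤ ρ ^ 2 := by gcongr
  rw [mul_pow, inv_pow, Real.sq_sqrt hT.le]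
  field_simp
  linarith

lemma heatKernel_le_of_le_norm {ρ T s : ℝ} (hρ : 0 ≤ ρ) (hs : s ∈ Set.Ioc 0 T)
    (hTρ : 2 * (Module.finrank ℝ E + 1) * T = ρ ^ 2) {z : E} (hz : 3 * ρ ≤ ‖z‖) :
    heatKernel s z ≤ (2 * Real.pi) ^ (-(Module.finrank ℝ E / 2 : ℝ)) *
      ((√T ^ Module.finrank ℝ E)⁻¹ * Real.exp (-(Module.finrank ℝ E + 1))) / 2 := by
  set n := Module.finrank ℝ E
  have hs0 := hs.1
  have hT : 0 < T := hs0.trans_le hs.2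
  have : 0 < √s := Real.sqrt_pos.2 hs0
  have : 0 < √T := Real.sqrt_pos.2 hT
  set r := √T / √s with hr
  have hr1 : 1 ≤ r := (one_le_div (by positivity)).2 (Real.sqrt_le_sqrt hs.2)
  have hexp : -(1 / 2) * ((√s)⁻¹ * ‖z‖) ^ 2 ≤ -9 * (n + 1) * r ^ 2 := by
    have : (3 * ρ) ^ 2 ≤ ‖z‖ ^ 2 := by gcongr
    rw [hr, mul_pow, inv_pow, div_pow, Real.sq_sqrt hs0.le, Real.sq_sqrt hT.le]
    field_simp
    linarith
  have hpow : (√s ^ n)⁻¹ = (√T ^ n)⁻¹ * r ^ n := by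
    rw [hr, div_pow]
    field_simp
  calc heatKernel s z
      ≤ (2 * Real.pi) ^ (-(n / 2 : ℝ)) *
          ((√T ^ n)⁻¹ * (r ^ n * Real.exp (-9 * (n + 1) * r ^ 2))) := by
        rw [heatKernel_eq, hpow, mul_assoc (√T ^ n)⁻¹]
        gcongr
    _ ≤ (2 * Real.pi) ^ (-(n / 2 : ℝ)) * ((√T ^ n)⁻¹ * (Real.exp (-(n + 1)) / 2)) := by
        gcongr
        exact pow_mul_exp_neg_le n hr1
    _ = _ := by ring

lemma exists_heatKernel_bounds {ρ : ℝ} (hρ : 0 < ρ) : ∃ T > 0, ∃ κ > 0,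
    (∀ w : E, ‖w‖ ≤ ρ → κ ≤ heatKernel T w) ∧
      ∀ s ∈ Set.Ioc 0 T, ∀ z : E, 3 * ρ ≤ ‖z‖ → heatKernel s z ≤ κ / 2 := by
  obtain ⟨T, hT, hTρ⟩ : ∃ T > 0, 2 * ((Module.finrank ℝ E : ℝ) + 1) * T = ρ ^ 2 :=
    ⟨ρ ^ 2 / (2 * (Module.finrank ℝ E + 1)), by positivity, by field_simp⟩
  exact ⟨T, hT, _, by positivity, fun _ => le_heatKernel_of_norm_le hT hTρ,
    fun _ hs _ => heatKernel_le_of_le_norm hρ.le hs hTρ⟩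

variable [FiniteDimensional ℝ E] [MeasurableSpace E] [BorelSpace E]

lemma heatSemigroup_eq_integral_heatKernel {F : Type*} [NormedAddCommGroup F] [NormedSpace ℝ F]
    (g : E → F) {s : ℝ} (hs : 0 < s) (x : E) :
    heatSemigroup s g x = ∫ y, heatKernel s (y - x) • g y := by
  have hσ : 0 < √s := Real.sqrt_pos.2 hs
  have hscale := Measure.integral_comp_smul (volume : Measure E)
    (fun w => gaussianDensity ((√s)⁻¹ • w) • g (x + w)) √s
  simp only [inv_smul_smul₀ hσ.ne'] at hscale
  rw [heatSemigroup, integral_stdGaussian_eq, hscale, abs_of_nonneg (by positivity),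
    ← integral_smul, ← integral_sub_right_eq_self _ x]
  simp only [add_sub_cancel, smul_smul, heatKernel]

lemma integrable_heatKernel_mul {g : E → ℝ} (hg : Integrable g) (s : ℝ) (x : E) :
    Integrable fun y => heatKernel s (y - x) * g y := by
  refine hg.bdd_mul (c := heatKernel s (0 : E))
    (by fun_prop : Continuous _).aestronglyMeasurable (Eventually.of_forall fun y => ?_)
  rw [Real.norm_of_nonneg (heatKernel_nonneg _ _)]
  exact heatKernel_le_of_norm_le s (by simp)

lemma heatSemigroup_le_mul_integral {g : E → ℝ} (hg : Integrable g) (hg0 : ∀ y, g y ≤ 0) {κ s : ℝ}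
    (hs : 0 < s) {x : E} (hκ : ∀ y, g y ≠ 0 → κ ≤ heatKernel s (y - x)) :
    heatSemigroup s g x ≤ κ * ∫ y, g y := by
  rw [heatSemigroup_eq_integral_heatKernel g hs, ← integral_const_mul]
  refine integral_mono (integrable_heatKernel_mul hg s x) (hg.const_mul κ) fun y => ?_
  rcases eq_or_ne (g y) 0 with h | h
  · simp [h]
  · exact mul_le_mul_of_nonpos_right (hκ y h) (hg0 y)

lemma mul_integral_le_heatSemigroup {g : E → ℝ} (hg : Integrable g) (hg0 : ∀ y, g y ≤ 0) {κ s : ℝ}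
    (hs : 0 < s) {x : E} (hκ : ∀ y, g y ≠ 0 → heatKernel s (y - x) ≤ κ) :
    κ * ∫ y, g y ≤ heatSemigroup s g x := by
  rw [heatSemigroup_eq_integral_heatKernel g hs, ← integral_const_mul]
  refine integral_mono (hg.const_mul κ) (integrable_heatKernel_mul hg s x) fun y => ?_
  rcases eq_or_ne (g y) 0 with h | h
  · simp [h]
  · exact mul_le_mul_of_nonpos_right (hκ y h) (hg0 y)

end HeatKernel

/-- Compare `f` with the heat flow of its restriction to `ball x₀ ρ`: up to a suitable time the
heat kernel seen from the sphere of radius `4 * ρ` is at most half the kernel seen from `x₀`. -/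
theorem IsViscositySubharmonicOn.exists_integral_neg_le {ρ : ℝ} (hρ : 0 < ρ) :
    ∃ K > 0, ∀ (f : 𝔼 → ℝ) (B : Set 𝔼) (x₀ : 𝔼) (N : ℝ), IsViscositySubharmonicOn f B →
      closedBall x₀ (4 * ρ) ⊆ B → (∀ x ∈ closedBall x₀ (4 * ρ), f x ∈ Set.Icc (-N) 0) →
      IntegrableOn f (ball x₀ ρ) ∧ ∫ x in ball x₀ ρ, -f x ≤ K * -f x₀ := by
  obtain ⟨T, hT, κ, hκ, hnear, hfar⟩ := exists_heatKernel_bounds (E := 𝔼) hρ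
  refine ⟨2 / κ, by positivity, fun f B x₀ N hf hKB hN => ?_⟩
  have hUK : ball x₀ ρ ⊆ closedBall x₀ (4 * ρ) :=
    ball_subset_closedBall.trans (closedBall_subset_closedBall (by linarith))
  have hN' : ∀ x ∈ ball x₀ ρ, f x ∈ Set.Icc (-N) 0 := fun x hx => hN x (hUK hx)
  have hN0 : 0 ≤ N := neg_nonpos.1 ((hN' x₀ (mem_ball_self hρ)).1.trans
    (hN' x₀ (mem_ball_self hρ)).2)
  set g := (ball x₀ ρ).indicator f
  have hgU : ∀ y, g y ≠ 0 → dist y x₀ < ρ := fun y hy =>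
    mem_ball.1 (Set.mem_of_indicator_ne_zero hy)
  have hg0 : ∀ x, g x ≤ 0 := Set.indicator_nonpos fun x hx => (hN' x hx).2
  have hgi : Integrable g := integrable_indicator_of_upperSemicontinuousOn
    (hf.upperSemicontinuousOn.mono (hUK.trans hKB)) isOpen_ball measure_ball_lt_top.ne hN0 hN'
  have hI : ∫ y, g y = ∫ y in ball x₀ ρ, f y := integral_indicator measurableSet_ball
  have hupper : heatSemigroup T g x₀ ≤ κ * ∫ y, g y := heatSemigroup_le_mul_integral hgi hg0 hT
    fun y hy => hnear _ (by rw [← dist_eq_norm]; exact (hgU y hy).le)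
  have hlower : ∀ x ∈ frontier (closedBall x₀ (4 * ρ)), ∀ s ∈ Set.Ioc 0 T,
      -(-(κ / 2 * ∫ y, g y)) ≤ heatSemigroup s g x := fun x hx s hs => by
    rw [neg_neg]
    refine mul_integral_le_heatSemigroup hgi hg0 hs.1 fun y hy => hfar s hs _ ?_
    have hx' : dist x x₀ = 4 * ρ := frontier_closedBall_subset_sphere hx
    linarith [dist_triangle_left x x₀ y, hgU y hy, dist_eq_norm y x]
  have hfx₀ : f x₀ ≤ heatSemigroup T g x₀ + -(κ / 2 * ∫ y, g y) :=
    hf.le_heatSemigroup_indicator_add (isCompact_closedBall x₀ (4 * ρ)) hKB isOpen_ball hUK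
      (by nlinarith [integral_nonpos (μ := volume) hg0]) (fun x hx => (hN x hx).1)
      (fun x hx => (hN x hx).2) hlower (mem_closedBall_self (by linarith)) ⟨hT.le, le_rfl⟩
  refine ⟨(integrable_indicator_iff measurableSet_ball).1 hgi, ?_⟩
  rw [integral_neg, ← hI, div_mul_eq_mul_div, le_div_iff₀ hκ]
  linarith

section LaplacianAlgebra

lemma lap_add {f g : 𝔼 → ℝ} (hf : ContDiff ℝ 2 f) (hg : ContDiff ℝ 2 g) (x : 𝔼) :
    lap (fun y => f y + g y) x = lap f x + lap g x := by
  rw [lap_eq_laplacian hf, lap_eq_laplacian hg, lap_eq_laplacian (hf.add hg)]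
  exact hf.contDiffAt.laplacian_add hg.contDiffAt

lemma lap_const_mul (c : ℝ) (f : 𝔼 → ℝ) (x : 𝔼) : lap (fun y => c * f y) x = c * lap f x := by
  simp only [lap, secondDeriv, Finset.mul_sum]
  refine Finset.sum_congr rfl fun i _ => ?_
  have hfun : (fun y => fderiv ℝ (fun z => c * f z) y (EuclideanSpace.single i 1)) =
      c • fun y => fderiv ℝ f y (EuclideanSpace.single i 1) := by
    ext y
    exact DFunLike.congr_fun (congrFun (fderiv_const_smul_field c) y) _
  rw [hfun, fderiv_const_smul_field]
  rfl

lemma lap_add_const (f : 𝔼 → ℝ) (c : ℝ) (x : 𝔼) : lap (fun y => f y + c) x = lap f x := by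
  simp only [lap, secondDeriv, fderiv_add_const]

end LaplacianAlgebra

section TouchingFromAbove

lemma exists_bilin_sum_eq_zero_and_eq_add_norm_sq {A : 𝔼 →L[ℝ] 𝔼 →L[ℝ] ℝ}
    (hA : ∑ i : Fin m, A (EuclideanSpace.single i 1) (EuclideanSpace.single i 1) < 0) :
    ∃ c > 0, ∃ T : 𝔼 →L[ℝ] 𝔼 →L[ℝ] ℝ,
      ∑ i : Fin m, T (EuclideanSpace.single i 1) (EuclideanSpace.single i 1) = 0 ∧
        ∀ v, T v v = A v v + c * ‖v‖ ^ 2 := by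
  set a := ∑ i : Fin m, A (EuclideanSpace.single i 1) (EuclideanSpace.single i 1) with ha
  have hm : 0 < (m : ℝ) := by
    rcases Nat.eq_zero_or_pos m with rfl | hm
    · simp [ha] at hA
    · exact_mod_cast hm
  obtain ⟨G, hG⟩ : ∃ G : 𝔼 →L[ℝ] 𝔼 →L[ℝ] ℝ, ∀ v, G v v = ‖v‖ ^ 2 :=
    ⟨innerSL ℝ, real_inner_self_eq_norm_sq⟩
  refine ⟨-a / m, div_pos (neg_pos.2 hA) hm, A + (-a / m) • G, ?_, fun v => ?_⟩
  · simp only [add_apply, smul_apply, Finset.sum_add_distrib, ← ha, hG, PiLp.norm_single,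
      norm_one, one_pow, smul_eq_mul, mul_one, Finset.sum_const, Finset.card_univ,
      Fintype.card_fin, nsmul_eq_mul]
    field_simp
    ring
  · simp only [add_apply, smul_apply, smul_eq_mul, hG]

/-- If `lap φ x₀ < 0`, adding a multiple of `‖x - x₀‖²` to the Taylor polynomial of `φ` produces a
harmonic quadratic that dominates `u` strictly on a small sphere but not at its centre. -/
lemma SubharmonicOn.lap_nonneg_of_eventually_le {u : 𝔼 → EReal} {B : Set 𝔼}
    (hu : SubharmonicOn u B) (hB : IsOpen B) {φ : 𝔼 → ℝ} (hφ : ContDiff ℝ 2 φ) {x₀ : 𝔼}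
    (hx₀ : x₀ ∈ B) (hle : ∀ᶠ x in 𝓝 x₀, u x ≤ (φ x : EReal)) (heq : u x₀ = (φ x₀ : EReal)) :
    0 ≤ lap φ x₀ := by
  by_contra! hneg
  rw [lap_eq_sum_fderiv_fderiv hφ] at hneg
  obtain ⟨c, hc, T, hT, hTv⟩ := exists_bilin_sum_eq_zero_and_eq_add_norm_sq hneg
  obtain ⟨r, hr, hr_ball⟩ := nhds_basis_closedBall.eventually_iff.1 (hle.and
    ((hB.eventually_mem hx₀).and
    ((isLittleO_sub_quadraticPoly x₀ hφ).def (show 0 < c / 4 by positivity))))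
  set h := quadraticPoly (φ x₀ - c / 4 * r ^ 2) (fderiv ℝ φ x₀) T x₀ with hh
  have hh2 : ContDiff ℝ 2 h := contDiff_quadraticPoly ..
  have hcentre := hu.2.2.2 x₀ r hr (fun x hx => (hr_ball hx).2.1) h hh2.continuous.continuousOn
    (fun w _ => ⟨hh2.contDiffAt, by rw [hh, lap_quadraticPoly, hT]⟩) (fun w hw => ?_)
    x₀ (mem_ball_self hr)
  · rw [heq, EReal.coe_le_coe_iff] at hcentre
    simp only [hh, quadraticPoly, sub_self, map_zero] at hcentre
    nlinarith [mul_pos hc (pow_pos hr 2)]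
  · obtain ⟨hw_le, -, hw_taylor⟩ := hr_ball (sphere_subset_closedBall hw)
    refine hw_le.trans (EReal.coe_le_coe_iff.2 ?_)
    have hw_taylor := (le_abs_self _).trans hw_taylor
    rw [Real.norm_of_nonneg (by positivity), mem_sphere_iff_norm.1 hw] at hw_taylor
    simp only [hh, quadraticPoly, hTv, mem_sphere_iff_norm.1 hw] at hw_taylor ⊢
    linarith

end TouchingFromAbove

section Truncation

/-- The truncation `max(a, -N)` of a value `a ∈ [-∞, ∞)` from below, as a real number. For `a = ⊤`
it takes the junk value `0`. -/
def truncBelow (N : ℝ) (a : EReal) : ℝ :=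
  (max a ((-N : ℝ) : EReal)).toReal

variable {N : ℝ} {a : EReal}

lemma coe_truncBelow (ha : a < ⊤) : (truncBelow N a : EReal) = max a ((-N : ℝ) : EReal) :=
  EReal.coe_toReal (max_lt ha (EReal.coe_lt_top _)).ne
    ((EReal.bot_lt_coe _).trans_le (le_max_right _ _)).ne'

lemma neg_le_truncBelow (ha : a < ⊤) : -N ≤ truncBelow N a := by
  rw [← EReal.coe_le_coe_iff, coe_truncBelow ha]
  exact le_max_right _ _

lemma le_coe_truncBelow (ha : a < ⊤) : a ≤ (truncBelow N a : EReal) := by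
  rw [coe_truncBelow ha]
  exact le_max_left _ _

lemma truncBelow_le {b : ℝ} (hb : a ≤ b) (hN : -N ≤ b) : truncBelow N a ≤ b := by
  rw [← EReal.coe_le_coe_iff, coe_truncBelow (hb.trans_lt (EReal.coe_lt_top b))]
  exact max_le hb (EReal.coe_le_coe_iff.2 hN)

lemma truncBelow_eq_toReal (ha : ((-N : ℝ) : EReal) ≤ a) : truncBelow N a = a.toReal := by
  rw [truncBelow, max_eq_left ha]

lemma truncBelow_eq_neg (ha : a ≤ ((-N : ℝ) : EReal)) : truncBelow N a = -N := by
  rw [truncBelow, max_eq_right ha, EReal.toReal_coe]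

lemma truncBelow_anti {N' : ℝ} (ha : a < ⊤) (h : N ≤ N') : truncBelow N' a ≤ truncBelow N a :=
  truncBelow_le (le_coe_truncBelow ha) ((neg_le_neg h).trans (neg_le_truncBelow ha))

lemma abs_truncBelow_le (hN : 0 ≤ N) (hbot : a ≠ ⊥) (htop : a ≠ ⊤) :
    |truncBelow N a| ≤ |a.toReal| := by
  lift a to ℝ using ⟨htop, hbot⟩
  rcases le_total (-N) a with h | h
  · rw [truncBelow_eq_toReal (EReal.coe_le_coe_iff.2 h)]
  · rw [truncBelow_eq_neg (EReal.coe_le_coe_iff.2 h), EReal.toReal_coe, abs_neg, abs_of_nonneg hN]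
    exact (le_neg_of_le_neg h).trans (neg_le_abs a)

lemma eventually_truncBelow_eq (hbot : a ≠ ⊥) :
    ∀ᶠ n : ℕ in atTop, truncBelow n a = a.toReal := by
  filter_upwards [eventually_ge_atTop ⌈-a.toReal⌉₊] with n hn
  exact truncBelow_eq_toReal ((EReal.coe_le_coe_iff.2 (neg_le.1 (Nat.ceil_le.1 hn))).trans
    (EReal.coe_toReal_le hbot))

lemma toENNReal_neg_eq_iSup (ha : a < ⊤) :
    (-a).toENNReal = ⨆ n : ℕ, ENNReal.ofReal (-truncBelow n a) := by
  rcases eq_or_ne a ⊥ with rfl | hbot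
  · simp [truncBelow_eq_neg bot_le, ENNReal.iSup_natCast]
  rw [EReal.toENNReal_of_ne_top (by simpa using hbot), EReal.toReal_neg_eq]
  obtain ⟨n, hn⟩ := (eventually_truncBelow_eq hbot).exists
  refine le_antisymm (le_iSup_of_le n (by rw [hn])) (iSup_le fun k => ENNReal.ofReal_le_ofReal ?_)
  rw [neg_le_neg_iff, ← EReal.coe_le_coe_iff, EReal.coe_toReal ha.ne hbot]
  exact le_coe_truncBelow ha

lemma enorm_toReal_le {M : ℝ} (ha : a ≤ M) :
    ‖a.toReal‖ₑ ≤ ENNReal.ofReal M + (-a).toENNReal := by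
  induction a with
  | bot => simp
  | top => simp at ha
  | coe a =>
    rw [EReal.toReal_coe, ← EReal.coe_neg, EReal.toENNReal_of_ne_top (EReal.coe_ne_top _),
      EReal.toReal_coe, Real.enorm_eq_ofReal_abs]
    rcases le_total 0 a with h | h
    · rw [abs_of_nonneg h]
      exact (ENNReal.ofReal_le_ofReal (EReal.coe_le_coe_iff.1 ha)).trans le_self_add
    · rw [abs_of_nonpos h]
      exact le_add_self

lemma SubharmonicOn.isViscositySubharmonicOn_truncBelow {u : 𝔼 → EReal} {B : Set 𝔼}
    (hu : SubharmonicOn u B) (hB : IsOpen B) (N : ℝ) :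
    IsViscositySubharmonicOn (fun x => truncBelow N (u x)) B where
  upperSemicontinuousOn x hx c hc := by
    dsimp only at hc ⊢
    rw [← EReal.coe_lt_coe_iff, coe_truncBelow (hu.2.1 x hx), max_lt_iff] at hc
    filter_upwards [hu.1 x hx c hc.1, self_mem_nhdsWithin] with y hy hyB
    rw [← EReal.coe_lt_coe_iff, coe_truncBelow (hu.2.1 y hyB)]
    exact max_lt hy hc.2
  lap_nonneg x₀ hx₀ φ hφ hmax := by
    have hnear := hmax.and (hB.eventually_mem hx₀)
    rcases le_or_gt (u x₀) ((-N : ℝ) : EReal) with hle | hgt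
    · refine lap_nonneg_of_isLocalMin hφ (hnear.mono fun x hx => ?_)
      have := neg_le_truncBelow (N := N) (hu.2.1 x hx.2)
      have := truncBelow_eq_neg hle
      linarith [hx.1]
    · have heq : (truncBelow N (u x₀) : EReal) = u x₀ := by
        rw [coe_truncBelow (hu.2.1 x₀ hx₀), max_eq_left hgt.le]
      rw [← lap_add_const φ (truncBelow N (u x₀) - φ x₀)]
      refine hu.lap_nonneg_of_eventually_le hB (hφ.add contDiff_const) hx₀
        (hnear.mono fun x hx => ?_) ?_
      · refine (le_coe_truncBelow (N := N) (hu.2.1 x hx.2)).trans (EReal.coe_le_coe_iff.2 ?_)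
        linarith [hx.1]
      · rw [add_sub_cancel, heq]

end Truncation

section LocalIntegrability

variable {u : EuclideanSpace ℝ (Fin m) → EReal} {B : Set (EuclideanSpace ℝ (Fin m))}

namespace SubharmonicOn

lemma aemeasurable (hu : SubharmonicOn u B) (hB : MeasurableSet B) :
    AEMeasurable u (volume.restrict B) :=
  aemeasurable_restrict_of_measurable_subtype hB
    (upperSemicontinuousOn_iff_restrict.2 hu.1).measurable

lemma exists_forall_le_coe (hu : SubharmonicOn u B) (hB : IsOpen B)
    {K : Set (EuclideanSpace ℝ (Fin m))} (hK : IsCompact K) (hKB : K ⊆ B) :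
    ∃ M : ℝ, 0 ≤ M ∧ ∀ x ∈ K, u x ≤ M := by
  obtain ⟨M, hM⟩ := UpperSemicontinuousOn.bddAbove_of_isCompact hK
    ((hu.isViscositySubharmonicOn_truncBelow hB 0).upperSemicontinuousOn.mono hKB)
  refine ⟨max M 0, le_max_right _ _, fun x hx => ?_⟩
  exact (le_coe_truncBelow (hu.2.1 x (hKB hx))).trans
    (EReal.coe_le_coe_iff.2 ((hM ⟨x, hx, rfl⟩).trans (le_max_left _ _)))

lemma exists_lintegral_neg_truncBelow_le (hu : SubharmonicOn u B) (hB : IsOpen B)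
    {x₀ : EuclideanSpace ℝ (Fin m)} (hx₀ : u x₀ ≠ ⊥) {ρ : ℝ} (hρ : 0 < ρ)
    (hsub : closedBall x₀ (4 * ρ) ⊆ B) :
    ∃ C : ℝ, ∀ n : ℕ, ∫⁻ x in ball x₀ ρ, ENNReal.ofReal (-truncBelow n (u x)) ≤
      ENNReal.ofReal C := by
  obtain ⟨K, hK, hbound⟩ := IsViscositySubharmonicOn.exists_integral_neg_le (m := m) hρ
  obtain ⟨M, hM, huM⟩ := hu.exists_forall_le_coe hB (isCompact_closedBall x₀ (4 * ρ)) hsub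
  have hx₀_top : u x₀ < ⊤ := hu.2.1 x₀ (hsub (mem_closedBall_self (by positivity)))
  refine ⟨K * (M - (u x₀).toReal), fun n => ?_⟩
  have hle : ∀ x ∈ closedBall x₀ (4 * ρ), truncBelow n (u x) ≤ M := fun x hx =>
    truncBelow_le (huM x hx) ((neg_nonpos.2 n.cast_nonneg).trans hM)
  obtain ⟨hint, hint_le⟩ := hbound (fun x => truncBelow n (u x) - M) B x₀ (n + M)
    ((hu.isViscositySubharmonicOn_truncBelow hB n).sub_const M) hsub fun x hx =>
      ⟨by linarith [neg_le_truncBelow (N := n) (hu.2.1 x (hsub hx))], by linarith [hle x hx]⟩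
  have hball : ∀ᵐ x ∂volume.restrict (ball x₀ ρ), x ∈ closedBall x₀ (4 * ρ) := by
    filter_upwards [ae_restrict_mem measurableSet_ball] with x hx
    exact closedBall_subset_closedBall (by linarith) (ball_subset_closedBall hx)
  calc ∫⁻ x in ball x₀ ρ, ENNReal.ofReal (-truncBelow n (u x))
      ≤ ∫⁻ x in ball x₀ ρ, ENNReal.ofReal (-(truncBelow n (u x) - M)) :=
        lintegral_mono fun x => ENNReal.ofReal_le_ofReal (by linarith)
    _ = ENNReal.ofReal (∫ x in ball x₀ ρ, -(truncBelow n (u x) - M)) :=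
        (ofReal_integral_eq_lintegral_ofReal hint.neg (hball.mono fun x hx =>
          neg_nonneg.2 (sub_nonpos.2 (hle x hx)))).symm
    _ ≤ ENNReal.ofReal (K * (M - (u x₀).toReal)) := by
        refine ENNReal.ofReal_le_ofReal (hint_le.trans ?_)
        rw [neg_sub]
        gcongr
        rw [← EReal.coe_le_coe_iff, EReal.coe_toReal hx₀_top.ne hx₀]
        exact le_coe_truncBelow hx₀_top

lemma lintegral_toENNReal_neg_lt_top (hu : SubharmonicOn u B) (hB : IsOpen B)
    {x₀ : EuclideanSpace ℝ (Fin m)} (hx₀ : u x₀ ≠ ⊥) {ρ : ℝ} (hρ : 0 < ρ)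
    (hsub : closedBall x₀ (4 * ρ) ⊆ B) :
    ∫⁻ x in ball x₀ ρ, (-u x).toENNReal < ⊤ := by
  obtain ⟨C, hC⟩ := hu.exists_lintegral_neg_truncBelow_le hB hx₀ hρ hsub
  have hball : ball x₀ ρ ⊆ B :=
    (ball_subset_closedBall.trans (closedBall_subset_closedBall (by linarith))).trans hsub
  have hmeas (n : ℕ) : AEMeasurable (fun x => ENNReal.ofReal (-truncBelow n (u x)))
      (volume.restrict (ball x₀ ρ)) :=
    (((hu.aemeasurable hB.measurableSet).mono_set hball).max
      aemeasurable_const).ereal_toReal.neg.ennreal_ofReal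
  calc ∫⁻ x in ball x₀ ρ, (-u x).toENNReal
      = ∫⁻ x in ball x₀ ρ, ⨆ n : ℕ, ENNReal.ofReal (-truncBelow n (u x)) :=
        setLIntegral_congr_fun measurableSet_ball fun x hx =>
          toENNReal_neg_eq_iSup (hu.2.1 x (hball hx))
    _ = ⨆ n : ℕ, ∫⁻ x in ball x₀ ρ, ENNReal.ofReal (-truncBelow n (u x)) := by
        refine lintegral_iSup' hmeas ?_
        filter_upwards [ae_restrict_mem measurableSet_ball] with x hx i j hij
        exact ENNReal.ofReal_le_ofReal (neg_le_neg
          (truncBelow_anti (hu.2.1 x (hball hx)) (Nat.cast_le.2 hij)))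
    _ < ⊤ := (iSup_le hC).trans_lt ENNReal.ofReal_lt_top

/-- The set of points near which `u` is integrable is relatively closed: every such point has points
of finiteness of `u` nearby, and balls centred there have a radius bounded below. -/
lemma exists_nhds_lintegral_toENNReal_neg_lt_top (hu : SubharmonicOn u B) (hB : IsOpen B)
    (hconn : IsPreconnected B) {x : EuclideanSpace ℝ (Fin m)} (hx : x ∈ B) :
    ∃ U ∈ 𝓝 x, ∫⁻ y in U, (-u y).toENNReal < ⊤ := by
  set S := {x | ∃ U ∈ 𝓝 x, ∫⁻ y in U, (-u y).toENNReal < ⊤}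
  have hball : ∀ z ρ, u z ≠ ⊥ → 0 < ρ → closedBall z (4 * ρ) ⊆ B → ball z ρ ⊆ S :=
    fun z ρ hz hρ hsub y hy =>
      ⟨ball z ρ, isOpen_ball.mem_nhds hy, hu.lintegral_toENNReal_neg_lt_top hB hz hρ hsub⟩
  have hS : IsOpen S := by
    refine isOpen_iff_mem_nhds.2 fun x ⟨U, hU, hlt⟩ => ?_
    filter_upwards [eventually_mem_nhds_iff.2 hU] with y hy using ⟨U, hy, hlt⟩
  have hne : (B ∩ S).Nonempty := by
    obtain ⟨x₀, hx₀, hbot⟩ := hu.2.2.1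
    obtain ⟨r, hr, hsub⟩ := nhds_basis_closedBall.mem_iff.1 (hB.mem_nhds hx₀)
    exact ⟨x₀, hx₀, hball x₀ (r / 4) hbot (by positivity) (by rwa [mul_div_cancel₀ _ four_ne_zero])
      (mem_ball_self (by positivity))⟩
  refine hconn.subset_of_closure_inter_subset hS hne (fun x ⟨hxS, hxB⟩ => ?_) hx
  obtain ⟨r, hr, hsub⟩ := nhds_basis_closedBall.mem_iff.1 (hB.mem_nhds hxB)
  obtain ⟨y, hyx, U, hU, hlt⟩ := mem_closure_iff.1 hxS _ isOpen_ball
    (mem_ball_self (show 0 < r / 5 by positivity))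
  obtain ⟨ε, hε, hεU⟩ := Metric.mem_nhds_iff.1 (inter_mem hU (isOpen_ball.mem_nhds hyx))
  obtain ⟨z, hzε, hz⟩ : ∃ z ∈ ball y ε, u z ≠ ⊥ := by
    by_contra! hbot
    refine ((lintegral_mono_set (hεU.trans Set.inter_subset_left)).trans_lt hlt).ne ?_
    rw [setLIntegral_congr_fun measurableSet_ball (g := fun _ => ⊤) fun w hw => by simp [hbot w hw],
      setLIntegral_const, ENNReal.top_mul (measure_ball_pos volume y hε).ne']
  have hzx : dist z x < r / 5 := (hεU hzε).2
  refine hball z (r / 5) hz (by positivity) ((closedBall_subset_closedBall' ?_).trans hsub)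
    (by rwa [mem_ball, dist_comm])
  linarith

lemma ae_ne_bot (hu : SubharmonicOn u B) (hB : IsOpen B) (hconn : IsPreconnected B) :
    ∀ᵐ x ∂volume.restrict B, u x ≠ ⊥ := by
  rw [ae_restrict_iff' hB.measurableSet]
  refine measure_null_of_locally_null _ fun x hx => ?_
  simp only [Set.mem_compl_iff, Set.mem_ofPred_eq, not_forall, not_not] at hx
  obtain ⟨U, hU, hlt⟩ := hu.exists_nhds_lintegral_toENNReal_neg_lt_top hB hconn hx.1
  refine ⟨{y | u y = ⊥} ∩ (U ∩ B), ?_,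
    nonpos_iff_eq_zero.1 ((Measure.le_restrict_apply _ _).trans_eq ?_)⟩
  · filter_upwards [self_mem_nhdsWithin, mem_nhdsWithin_of_mem_nhds hU] with y hy hyU
    simp only [Set.mem_compl_iff, Set.mem_ofPred_eq, not_forall, not_not] at hy
    exact ⟨hy.2, hyU, hy.1⟩
  · have hmeas : AEMeasurable (fun y => (-u y).toENNReal) (volume.restrict (U ∩ B)) :=
      ((hu.aemeasurable hB.measurableSet).mono_set Set.inter_subset_right).neg.ereal_toENNReal
    have hfin := ae_lt_top' hmeas
      ((lintegral_mono_set Set.inter_subset_left).trans_lt hlt).ne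
    exact measure_mono_null (fun y (hy : u y = ⊥) => by simp [hy]) (ae_iff.1 hfin)

lemma locallyIntegrableOn_toReal (hu : SubharmonicOn u B) (hB : IsOpen B)
    (hconn : IsPreconnected B) : LocallyIntegrableOn (fun x => (u x).toReal) B := by
  intro x hx
  obtain ⟨U, hU, hlt⟩ := hu.exists_nhds_lintegral_toENNReal_neg_lt_top hB hconn hx
  obtain ⟨r, hr, hsub⟩ := nhds_basis_closedBall.mem_iff.1 (inter_mem hU (hB.mem_nhds hx))
  have hsubB := hsub.trans Set.inter_subset_right
  obtain ⟨M, -, huM⟩ := hu.exists_forall_le_coe hB (isCompact_closedBall x r) hsubB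
  refine ⟨closedBall x r, mem_nhdsWithin_of_mem_nhds (closedBall_mem_nhds x hr),
    ((hu.aemeasurable hB.measurableSet).mono_set hsubB).ereal_toReal.aestronglyMeasurable, ?_⟩
  calc ∫⁻ y in closedBall x r, ‖(u y).toReal‖ₑ
      ≤ ∫⁻ y in closedBall x r, (ENNReal.ofReal M + (-u y).toENNReal) := by
        exact setLIntegral_mono' measurableSet_closedBall fun y hy => enorm_toReal_le (huM y hy)
    _ < ⊤ := by
        rw [lintegral_add_left measurable_const, setLIntegral_const]
        exact ENNReal.add_lt_top.2
          ⟨ENNReal.mul_lt_top ENNReal.ofReal_lt_top measure_closedBall_lt_top,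
            (lintegral_mono_set (hsub.trans Set.inter_subset_left)).trans_lt hlt⟩

end SubharmonicOn

end LocalIntegrability

section SubharmonicOperations

variable {u v : EuclideanSpace ℝ (Fin m) → EReal} {B : Set (EuclideanSpace ℝ (Fin m))}

namespace SubharmonicOn

lemma sub_const (hu : SubharmonicOn u B) (s : ℝ) : SubharmonicOn (fun x => u x - s) B := by
  obtain ⟨husc, htop, ⟨x₀, hx₀, hbot⟩, hmaj⟩ := hu
  refine ⟨fun x hx c hc => ?_, fun x hx => ?_, ⟨x₀, hx₀, ?_⟩, fun z r hr hsub h hh hharm hle => ?_⟩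
  · simp only [EReal.sub_lt_iff (.inl (EReal.coe_ne_bot s)) (.inl (EReal.coe_ne_top s))] at hc ⊢
    exact husc x hx _ hc
  · exact (EReal.sub_lt_iff (.inl (EReal.coe_ne_bot s)) (.inl (EReal.coe_ne_top s))).2
      ((htop x hx).trans_eq (EReal.top_add_coe s).symm)
  · lift u x₀ to ℝ using ⟨(htop x₀ hx₀).ne, hbot⟩ with a
    exact EReal.coe_ne_bot (a - s)
  · have hs : ∀ w, u w - s ≤ h w ↔ u w ≤ ((h w + s : ℝ) : EReal) := fun w => by
      rw [EReal.sub_le_iff_le_add (by simp) (by simp), EReal.coe_add]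
    simp only [hs] at hle ⊢
    exact hmaj z r hr hsub _ (hh.add continuousOn_const)
      (fun w hw => ⟨(hharm w hw).1.add contDiffAt_const, by rw [lap_add_const, (hharm w hw).2]⟩) hle

lemma const_mul (hu : SubharmonicOn u B) {t : ℝ} (ht : 0 < t) :
    SubharmonicOn (fun x => (t : EReal) * u x) B := by
  obtain ⟨husc, htop, ⟨x₀, hx₀, hbot⟩, hmaj⟩ := hu
  have ht' : (0 : EReal) < t := EReal.coe_pos.2 ht
  have hlt : ∀ a c : EReal, t * a < c ↔ a < c / t := fun a c => by
    rw [EReal.lt_div_iff ht' (EReal.coe_ne_top t), mul_comm]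
  refine ⟨fun x hx c hc => ?_, fun x hx => ?_, ⟨x₀, hx₀, ?_⟩, fun z r hr hsub h hh hharm hle => ?_⟩
  · simp only [hlt] at hc ⊢
    exact husc x hx _ hc
  · rw [hlt, EReal.top_div_of_pos_ne_top ht' (EReal.coe_ne_top t)]
    exact htop x hx
  · lift u x₀ to ℝ using ⟨(htop x₀ hx₀).ne, hbot⟩ with a
    exact EReal.coe_ne_bot (t * a)
  · have hle_div : ∀ w, t * u w ≤ h w ↔ u w ≤ ((h w / t : ℝ) : EReal) := fun w => by
      rw [EReal.coe_div, EReal.le_div_iff_mul_le ht' (EReal.coe_ne_top t), mul_comm]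
    simp only [hle_div, div_eq_inv_mul] at hle ⊢
    exact hmaj z r hr hsub _ (continuousOn_const.mul hh)
      (fun w hw => ⟨contDiffAt_const.mul (hharm w hw).1, by
        rw [lap_const_mul, (hharm w hw).2, mul_zero]⟩) hle

lemma sup (hu : SubharmonicOn u B) (hv : SubharmonicOn v B) :
    SubharmonicOn (fun x => max (u x) (v x)) B := by
  obtain ⟨husc, hutop, ⟨x₀, hx₀, hbot⟩, humaj⟩ := hu
  obtain ⟨hvsc, hvtop, -, hvmaj⟩ := hv
  refine ⟨husc.sup hvsc, fun x hx => max_lt (hutop x hx) (hvtop x hx),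
    ⟨x₀, hx₀, ((bot_lt_iff_ne_bot.2 hbot).trans_le (le_max_left _ _)).ne'⟩,
    fun z r hr hsub h hh hharm hle w hw => max_le ?_ ?_⟩
  · exact humaj z r hr hsub h hh hharm (fun w hw => (le_max_left _ _).trans (hle w hw)) w hw
  · exact hvmaj z r hr hsub h hh hharm (fun w hw => (le_max_right _ _).trans (hle w hw)) w hw

end SubharmonicOn

end SubharmonicOperations

section TestFunctions

variable {u : EuclideanSpace ℝ (Fin m) → EReal} {φ ψ : EuclideanSpace ℝ (Fin m) → ℝ}
  {B U : Set (EuclideanSpace ℝ (Fin m))} {μ : Measure (EuclideanSpace ℝ (Fin m))}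

/-- `φ` is a test function on `B`, in the sense of distribution theory: a smooth function on the
whole space whose support is compact and contained in `B`. -/
structure IsTestFunction (φ : 𝔼 → ℝ) (B : Set 𝔼) : Prop where
  contDiff : ContDiff ℝ (⊤ : ℕ∞) φ
  hasCompactSupport : HasCompactSupport φ
  tsupport_subset : tsupport φ ⊆ B

namespace IsTestFunction

lemma contDiff_two (hφ : IsTestFunction φ B) : ContDiff ℝ 2 φ :=
  contDiff_infty.1 hφ.contDiff 2

lemma mono (hφ : IsTestFunction φ U) (h : U ⊆ B) : IsTestFunction φ B :=
  ⟨hφ.contDiff, hφ.hasCompactSupport, hφ.tsupport_subset.trans h⟩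

lemma mul_left (hψ : IsTestFunction ψ U) (hφ : ContDiff ℝ (⊤ : ℕ∞) φ) :
    IsTestFunction (fun x => φ x * ψ x) U :=
  ⟨hφ.mul hψ.contDiff, hψ.hasCompactSupport.mul_left,
    tsupport_mul_subset_right.trans hψ.tsupport_subset⟩

lemma sub (hφ : IsTestFunction φ B) (hψ : IsTestFunction ψ B) :
    IsTestFunction (fun x => φ x - ψ x) B where
  contDiff := hφ.contDiff.sub hψ.contDiff
  hasCompactSupport := hφ.hasCompactSupport.sub hψ.hasCompactSupport
  tsupport_subset := (tsupport_sub φ ψ).trans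
    (Set.union_subset hφ.tsupport_subset hψ.tsupport_subset)

lemma integrable (hφ : IsTestFunction φ B) (hμ : ∀ x ∈ B, μ.FiniteAtFilter (𝓝 x)) :
    Integrable φ μ := by
  have hfin : μ (tsupport φ) < ⊤ :=
    hφ.hasCompactSupport.measure_lt_top_of_nhdsWithin fun x hx =>
      (hμ x (hφ.tsupport_subset hx)).filter_mono nhdsWithin_le_nhds
  exact (integrableOn_iff_integrable_of_support_subset (subset_tsupport φ)).1
    (hφ.contDiff.continuous.continuousOn.integrableOn_of_subset_isCompact
      hφ.hasCompactSupport.isCompact (isClosed_tsupport φ).measurableSet subset_rfl hfin.ne)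

lemma setIntegral_mul_lap (hφ : IsTestFunction φ B) (f : 𝔼 → ℝ) :
    ∫ x in B, f x * lap φ x = ∫ x, f x * lap φ x :=
  setIntegral_eq_integral_of_forall_compl_eq_zero fun x hx => by
    rw [lap_eq_zero_of_notMem_tsupport fun h => hx (hφ.tsupport_subset h), mul_zero]

lemma integrable_mul_lap (hφ : IsTestFunction φ B) {f : 𝔼 → ℝ} (hf : LocallyIntegrableOn f B) :
    Integrable fun x => f x * lap φ x := by
  have hcont := continuous_lap hφ.contDiff_two
  obtain ⟨C, hC⟩ :=
    hcont.bounded_above_of_compact_support (hasCompactSupport_lap hφ.hasCompactSupport)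
  have hint : IntegrableOn (fun x => f x * lap φ x) (tsupport φ) :=
    Integrable.mul_bdd (c := C)
      (hf.integrableOn_compact_subset hφ.tsupport_subset hφ.hasCompactSupport)
      hcont.aestronglyMeasurable (Eventually.of_forall hC)
  exact hint.integrable_of_forall_notMem_eq_zero fun x hx => by
    rw [lap_eq_zero_of_notMem_tsupport hx, mul_zero]

end IsTestFunction

namespace SubharmonicOn

lemma integral_toReal_mul_lap_nonneg (hu : SubharmonicOn u B) (hB : IsOpen B)
    (hconn : IsPreconnected B) (hφ : IsTestFunction φ B) (hφ0 : ∀ x, 0 ≤ φ x) :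
    0 ≤ ∫ x in B, (u x).toReal * lap φ x := by
  have hlim : Tendsto (fun n : ℕ => ∫ x in B, truncBelow n (u x) * lap φ x) atTop
      (𝓝 (∫ x in B, (u x).toReal * lap φ x)) := by
    refine tendsto_integral_of_dominated_convergence (fun x => ‖(u x).toReal * lap φ x‖)
      (fun n => ?_) ?_ (fun n => ?_) ?_
    · exact ((hu.aemeasurable hB.measurableSet).max
        aemeasurable_const).ereal_toReal.aestronglyMeasurable.mul
        (continuous_lap hφ.contDiff_two).aestronglyMeasurable
    · exact (hφ.integrable_mul_lap (hu.locallyIntegrableOn_toReal hB hconn)).norm.integrableOn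
    · filter_upwards [ae_restrict_mem hB.measurableSet, hu.ae_ne_bot hB hconn] with x hx hbot
      simp only [norm_mul, Real.norm_eq_abs]
      exact mul_le_mul_of_nonneg_right
        (abs_truncBelow_le n.cast_nonneg hbot (hu.2.1 x hx).ne) (abs_nonneg _)
    · filter_upwards [hu.ae_ne_bot hB hconn] with x hbot
      refine tendsto_const_nhds.congr' ?_
      filter_upwards [eventually_truncBelow_eq hbot] with n hn
      rw [hn]
  refine ge_of_tendsto' hlim fun n => ?_
  rw [hφ.setIntegral_mul_lap]
  exact (hu.isViscositySubharmonicOn_truncBelow hB n).integral_mul_lap_nonneg hB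
    (fun x hx => neg_le_truncBelow (hu.2.1 x hx)) hφ.contDiff_two hφ.hasCompactSupport
    hφ.tsupport_subset hφ0

lemma integral_toReal_mul_lap_mono (hu : SubharmonicOn u B) (hB : IsOpen B)
    (hconn : IsPreconnected B) (hψ : IsTestFunction ψ B) (hφ : IsTestFunction φ B)
    (hle : ∀ x, ψ x ≤ φ x) :
    ∫ x in B, (u x).toReal * lap ψ x ≤ ∫ x in B, (u x).toReal * lap φ x := by
  have hsub := hφ.sub hψ
  have hint := hu.locallyIntegrableOn_toReal hB hconn
  have hsplit (x : 𝔼) : lap φ x = lap ψ x + lap (fun y => φ y - ψ y) x := by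
    rw [← lap_add hψ.contDiff_two hsub.contDiff_two]
    simp only [add_sub_cancel]
  simp only [hsplit, mul_add]
  rw [integral_add (hψ.integrable_mul_lap hint).integrableOn
    (hsub.integrable_mul_lap hint).integrableOn]
  exact le_add_of_nonneg_right
    (hu.integral_toReal_mul_lap_nonneg hB hconn hsub fun x => sub_nonneg.2 (hle x))

end SubharmonicOn

lemma IsRieszMeasureOf.sub_const (hμ : IsRieszMeasureOf u B μ) (hu : SubharmonicOn u B)
    (hB : IsOpen B) (hconn : IsPreconnected B) (s : ℝ) :
    IsRieszMeasureOf (fun x => u x - s) B μ := by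
  refine ⟨hμ.1, hμ.2.1, fun φ hφ hc hs => ?_⟩
  have htest : IsTestFunction φ B := ⟨hφ, hc, hs⟩
  have hint := htest.integrable_mul_lap (hu.locallyIntegrableOn_toReal hB hconn)
  have hint_const := htest.integrable_mul_lap (locallyIntegrableOn_const s)
  calc ∫ x in B, (u x - s).toReal * lap φ x
      = ∫ x in B, ((u x).toReal * lap φ x - s * lap φ x) := by
        refine integral_congr_ae ?_
        filter_upwards [ae_restrict_mem hB.measurableSet, hu.ae_ne_bot hB hconn] with x hx hbot
        rw [EReal.toReal_sub (hu.2.1 x hx).ne hbot (EReal.coe_ne_top s) (EReal.coe_ne_bot s),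
          EReal.toReal_coe, sub_mul]
    _ = ∫ x in B, (u x).toReal * lap φ x := by
        rw [integral_sub hint.integrableOn hint_const.integrableOn,
          htest.setIntegral_mul_lap fun _ => s, integral_const_mul,
          integral_lap_eq_zero htest.contDiff_two hc, mul_zero, sub_zero]
    _ = ∫ x, φ x ∂μ := hμ.2.2 φ hφ hc hs

lemma exists_isTestFunction_eq_one (hU : IsOpen U) {K : Set (EuclideanSpace ℝ (Fin m))}
    (hK : IsCompact K) (hKU : K ⊆ U) :
    ∃ χ : 𝔼 → ℝ, IsTestFunction χ U ∧ (∀ x, χ x ∈ Set.Icc 0 1) ∧ ∀ x ∈ K, χ x = 1 := by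
  obtain ⟨L, hL, hKL, hLU⟩ := exists_compact_between hK hU hKU
  obtain ⟨χ, hχ, hrange, hsupp, hone⟩ := exists_contMDiff_support_eq_eq_one_iff
    (n := (⊤ : ℕ∞)) (modelWithCornersSelf ℝ 𝔼) (isOpen_interior (s := L)) hK.isClosed hKL
  have htsupp : tsupport χ ⊆ L :=
    closure_minimal (hsupp ▸ interior_subset) hL.isClosed
  exact ⟨χ, ⟨hχ.contDiff, hL.of_isClosed_subset (isClosed_tsupport _) htsupp, htsupp.trans hLU⟩,
    fun x => hrange (Set.mem_range_self x), fun x hx => (hone x).1 hx⟩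

lemma exists_seq_isTestFunction_eventually_eq_one (hU : IsOpen U) :
    ∃ χ : ℕ → 𝔼 → ℝ, (∀ n, IsTestFunction (χ n) U) ∧ (∀ n x, χ n x ∈ Set.Icc 0 1) ∧
      ∀ x ∈ U, ∀ᶠ n in atTop, χ n x = 1 := by
  have : LocallyCompactSpace U := hU.locallyCompactSpace
  set K := CompactExhaustion.choice U
  choose χ hχ hχ_mem hχ_one using fun n => exists_isTestFunction_eq_one hU
    ((K.isCompact n).image continuous_subtype_val) (Subtype.coe_image_subset U (K n))
  refine ⟨χ, hχ, hχ_mem, fun x hx => ?_⟩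
  filter_upwards [eventually_ge_atTop (K.find ⟨x, hx⟩)] with n hn
  exact hχ_one n x ⟨⟨x, hx⟩, K.mem_iff_find_le.2 hn, rfl⟩

end TestFunctions

section Comparison

variable {u v w : EuclideanSpace ℝ (Fin m) → EReal} {φ : EuclideanSpace ℝ (Fin m) → ℝ}
  {B U : Set (EuclideanSpace ℝ (Fin m))} {μ ν : Measure (EuclideanSpace ℝ (Fin m))}

/-- Cutting `φ` off outside `U` decreases it, hence decreases the action of `Δw ≥ 0`, while for the
cut-off function `w` may be replaced by `u`. -/
lemma IsRieszMeasureOf.integral_le_of_eqOn (hμ : IsRieszMeasureOf u B μ) (hw : SubharmonicOn w B)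
    (hB : IsOpen B) (hconn : IsPreconnected B) (hU : IsOpen U) (hUB : U ⊆ B) (heq : U.EqOn w u)
    (hμU : ∀ᵐ x ∂μ, x ∈ U) (hφ : IsTestFunction φ B) (hφ0 : ∀ x, 0 ≤ φ x) :
    ∫ x, φ x ∂μ ≤ ∫ x in B, (w x).toReal * lap φ x := by
  obtain ⟨χ, hχ, hχ_mem, hχ_one⟩ := exists_seq_isTestFunction_eventually_eq_one hU
  have hφχ (n : ℕ) : IsTestFunction (fun x => φ x * χ n x) U := (hχ n).mul_left hφ.contDiff
  have hφχ_le (n : ℕ) (x : 𝔼) : φ x * χ n x ≤ φ x :=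
    mul_le_of_le_one_right (hφ0 x) (hχ_mem n x).2
  have hcut (n : ℕ) : ∫ x, φ x * χ n x ∂μ ≤ ∫ x in B, (w x).toReal * lap φ x := by
    have htest := (hφχ n).mono hUB
    refine le_of_eq_of_le ?_
      (hw.integral_toReal_mul_lap_mono hB hconn htest hφ (hφχ_le n))
    rw [← hμ.2.2 _ htest.contDiff htest.hasCompactSupport htest.tsupport_subset]
    refine integral_congr_ae (Eventually.of_forall fun x => ?_)
    by_cases hx : x ∈ U
    · simp only [heq hx]
    · simp only [lap_eq_zero_of_notMem_tsupport fun h => hx ((hφχ n).tsupport_subset h), mul_zero]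
  refine le_of_tendsto' (tendsto_integral_of_dominated_convergence φ
    (fun n => (hφχ n).contDiff.continuous.aestronglyMeasurable) (hφ.integrable hμ.2.1)
    (fun n => Eventually.of_forall fun x => ?_) ?_) hcut
  · rw [Real.norm_of_nonneg (mul_nonneg (hφ0 x) (hχ_mem n x).1)]
    exact hφχ_le n x
  · filter_upwards [hμU] with x hx
    refine tendsto_const_nhds.congr' ?_
    filter_upwards [hχ_one x hx] with n hn
    rw [hn, mul_one]

lemma coe_mul_le_sub {a b : EReal} {s t : ℝ} (ht : 1 < t) (hab : a ≤ b)
    (hb : b < ((-s / (t - 1) : ℝ) : EReal)) : t * a ≤ b - s := by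
  rcases eq_or_ne a ⊥ with rfl | ha
  · rw [EReal.coe_mul_bot_of_pos (zero_lt_one.trans ht)]
    exact bot_le
  lift b to ℝ using ⟨(hb.trans (EReal.coe_lt_top _)).ne, (ha.bot_lt.trans_le hab).ne'⟩
  lift a to ℝ using ⟨(hab.trans_lt (EReal.coe_lt_top b)).ne, ha⟩
  rw [EReal.coe_le_coe_iff] at hab
  rw [EReal.coe_lt_coe_iff, lt_div_iff₀ (sub_pos.2 ht)] at hb
  rw [← EReal.coe_mul, ← EReal.coe_sub, EReal.coe_le_coe_iff]
  nlinarith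

lemma IsRieszMeasureOf.integral_le_integral_max (hμ : IsRieszMeasureOf u B μ)
    (hu : SubharmonicOn u B) (hv : SubharmonicOn v B) (hB : IsOpen B) (hconn : IsPreconnected B)
    (hle : ∀ x ∈ B, v x ≤ u x) (hpolar : μ {x | x ∈ B ∧ u x ≠ ⊥} = 0) {t : ℝ} (ht : 1 < t) (s : ℝ)
    (hφ : IsTestFunction φ B) (hφ0 : ∀ x, 0 ≤ φ x) :
    ∫ x, φ x ∂μ ≤ ∫ x in B, (max (t * v x) (u x - s)).toReal * lap φ x := by
  obtain ⟨V, hV, hBV⟩ := upperSemicontinuousOn_iff_preimage_Iio.1 hu.1 ((-s / (t - 1) : ℝ) : EReal)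
  have hmem {x : 𝔼} : x ∈ B ∩ V ↔ x ∈ B ∧ u x < ((-s / (t - 1) : ℝ) : EReal) := by
    rw [← hBV]; rfl
  refine (hμ.sub_const hu hB hconn s).integral_le_of_eqOn
    ((hv.const_mul (zero_lt_one.trans ht)).sup (hu.sub_const s)) hB hconn (hB.inter hV)
    Set.inter_subset_left (fun x hx => max_eq_right ?_) ?_ hφ hφ0
  · exact coe_mul_le_sub ht (hle x hx.1) (hmem.1 hx).2
  · have hμB : μ Bᶜ = 0 := by rw [hμ.1, Set.compl_inter_self, measure_empty]
    filter_upwards [measure_eq_zero_iff_ae_notMem.1 hμB, measure_eq_zero_iff_ae_notMem.1 hpolar]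
      with x hxB hxu
    have hxB : x ∈ B := not_not.1 hxB
    have hbot : u x = ⊥ := not_not.1 fun h => hxu ⟨hxB, h⟩
    exact hmem.2 ⟨hxB, hbot ▸ EReal.bot_lt_coe _⟩

lemma toReal_max_coe_mul_sub {a b : EReal} (ha : a ≠ ⊥) (ha' : a ≠ ⊤) (hb : b ≠ ⊥) (hb' : b ≠ ⊤)
    (s t : ℝ) : (max (t * a) (b - s)).toReal = max (t * a.toReal) (b.toReal - s) := by
  lift a to ℝ using ⟨ha', ha⟩
  lift b to ℝ using ⟨hb', hb⟩
  rw [← EReal.coe_mul, ← EReal.coe_sub, ← EReal.coe_strictMono.monotone.map_max]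
  simp only [EReal.toReal_coe]

lemma tendsto_max_mul_sub_natCast (a b : ℝ) :
    Tendsto (fun n : ℕ => max ((1 + 1 / ((n : ℝ) + 1)) * a) (b - n)) atTop (𝓝 a) := by
  have hmul : Tendsto (fun n : ℕ => (1 + 1 / ((n : ℝ) + 1)) * a) atTop (𝓝 a) := by
    simpa using (tendsto_one_div_add_atTop_nhds_zero_nat.const_add 1).mul_const a
  have hsub : Tendsto (fun n : ℕ => b - (n : ℝ)) atTop atBot :=
    tendsto_const_nhds.add_atBot (tendsto_neg_atTop_atBot.comp tendsto_natCast_atTop_atTop)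
  refine hmul.congr' ?_
  filter_upwards [hmul.eventually (lt_mem_nhds (sub_one_lt a)),
    hsub.eventually_le_atBot (a - 1)] with n h₁ h₂
  exact (max_eq_left (h₂.trans h₁.le)).symm

lemma abs_max_mul_sub_le {a b s t : ℝ} (ht : 0 ≤ t) (ht' : t ≤ 2) (hs : 0 ≤ s) :
    |max (t * a) (b - s)| ≤ 2 * |a| + |b| := by
  have hta : |t * a| ≤ 2 * |a| := by
    rw [abs_mul, abs_of_nonneg ht]
    gcongr
  have hlow := (abs_le.1 hta).1
  have hhigh := (abs_le.1 hta).2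
  have := abs_nonneg a
  have := abs_nonneg b
  refine abs_le.2 ⟨le_max_of_le_left (by linarith), max_le (by linarith) ?_⟩
  linarith [le_abs_self b]

lemma tendsto_integral_max_mul_lap (hu : SubharmonicOn u B) (hv : SubharmonicOn v B)
    (hB : IsOpen B) (hconn : IsPreconnected B) (hφ : IsTestFunction φ B) :
    Tendsto (fun n : ℕ => ∫ x in B,
      (max (((1 + 1 / ((n : ℝ) + 1) : ℝ) : EReal) * v x) (u x - (n : ℝ))).toReal * lap φ x) atTop
      (𝓝 (∫ x in B, (v x).toReal * lap φ x)) := by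
  have hfinite : ∀ᵐ x ∂volume.restrict B, ∀ s t : ℝ, (max (t * v x) (u x - s)).toReal =
      max (t * (v x).toReal) ((u x).toReal - s) := by
    filter_upwards [ae_restrict_mem hB.measurableSet, hu.ae_ne_bot hB hconn,
      hv.ae_ne_bot hB hconn] with x hx hubot hvbot
    exact toReal_max_coe_mul_sub hvbot (hv.2.1 x hx).ne hubot (hu.2.1 x hx).ne
  have hu_int := hu.locallyIntegrableOn_toReal hB hconn
  have hv_int := hv.locallyIntegrableOn_toReal hB hconn
  refine tendsto_integral_of_dominated_convergence
    (fun x => 2 * ‖(v x).toReal * lap φ x‖ + ‖(u x).toReal * lap φ x‖)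
    (fun n => ?_) ?_ (fun n => ?_) ?_
  · have hsub := ((hv.const_mul (t := 1 + 1 / ((n : ℝ) + 1)) (by positivity)).sup
      (hu.sub_const n)).locallyIntegrableOn_toReal hB hconn
    exact (hφ.integrable_mul_lap hsub).aestronglyMeasurable.restrict
  · exact (((hφ.integrable_mul_lap hv_int).norm.const_mul 2).add
      (hφ.integrable_mul_lap hu_int).norm).integrableOn
  · filter_upwards [hfinite] with x hx
    simp only [hx, norm_mul, Real.norm_eq_abs]
    rw [← mul_assoc, ← add_mul]
    have hn : 1 / ((n : ℝ) + 1) ≤ 1 := by simpa using Nat.one_div_le_one_div (α := ℝ) n.zero_le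
    exact mul_le_mul_of_nonneg_right
      (abs_max_mul_sub_le (by positivity) (by linarith) n.cast_nonneg) (abs_nonneg _)
  · filter_upwards [hfinite] with x hx
    simp only [hx]
    exact (tendsto_max_mul_sub_natCast _ _).mul_const _

lemma IsRieszMeasureOf.integral_le_integral (hμ : IsRieszMeasureOf u B μ)
    (hν : IsRieszMeasureOf v B ν) (hu : SubharmonicOn u B) (hv : SubharmonicOn v B) (hB : IsOpen B)
    (hconn : IsPreconnected B) (hle : ∀ x ∈ B, v x ≤ u x)
    (hpolar : μ {x | x ∈ B ∧ u x ≠ ⊥} = 0) (hφ : IsTestFunction φ B) (hφ0 : ∀ x, 0 ≤ φ x) :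
    ∫ x, φ x ∂μ ≤ ∫ x, φ x ∂ν := by
  rw [← hν.2.2 φ hφ.contDiff hφ.hasCompactSupport hφ.tsupport_subset]
  exact ge_of_tendsto' (tendsto_integral_max_mul_lap hu hv hB hconn hφ) fun n =>
    hμ.integral_le_integral_max hu hv hB hconn hle hpolar
      (lt_add_of_pos_right 1 Nat.one_div_pos_of_nat) n hφ hφ0

end Comparison

section MeasureComparison

lemma le_of_forall_isOpen_measure_le {X : Type*} [TopologicalSpace X] [MeasurableSpace X]
    {μ ν : Measure X} [ν.OuterRegular] (h : ∀ U, IsOpen U → μ U ≤ ν U) : μ ≤ ν := by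
  refine Measure.le_iff.2 fun s _ => ?_
  rw [s.measure_eq_iInf_isOpen ν]
  exact le_iInf₂ fun U hsU => le_iInf fun hU => (measure_mono hsU).trans (h U hU)

variable {B U : Set (EuclideanSpace ℝ (Fin m))} {μ ν : Measure (EuclideanSpace ℝ (Fin m))}

lemma measure_le_of_forall_integral_isTestFunction_le (hU : IsOpen U)
    (hμ : ∀ x ∈ U, μ.FiniteAtFilter (𝓝 x)) (hν : ∀ x ∈ U, ν.FiniteAtFilter (𝓝 x))
    (h : ∀ φ, IsTestFunction φ U → (∀ x, 0 ≤ φ x) → ∫ x, φ x ∂μ ≤ ∫ x, φ x ∂ν) : μ U ≤ ν U := by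
  obtain ⟨χ, hχ, hχ_mem, hχ_one⟩ := exists_seq_isTestFunction_eventually_eq_one hU
  have hχν (n : ℕ) : ENNReal.ofReal (∫ x, χ n x ∂ν) ≤ ν U := by
    rw [ofReal_integral_eq_lintegral_ofReal ((hχ n).integrable hν)
      (Eventually.of_forall fun x => (hχ_mem n x).1), ← lintegral_indicator_one hU.measurableSet]
    refine lintegral_mono fun x => ?_
    by_cases hx : x ∈ U
    · simpa [hx] using (hχ_mem n x).2
    · simp [image_eq_zero_of_notMem_tsupport fun h => hx ((hχ n).tsupport_subset h)]
  calc μ U = ∫⁻ _ in U, 1 ∂μ := setLIntegral_one U |>.symm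
    _ = ∫⁻ x in U, liminf (fun n => ENNReal.ofReal (χ n x)) atTop ∂μ := by
        refine setLIntegral_congr_fun hU.measurableSet fun x hx => (Tendsto.liminf_eq ?_).symm
        refine tendsto_const_nhds.congr' ?_
        filter_upwards [hχ_one x hx] with n hn
        rw [hn, ENNReal.ofReal_one]
    _ ≤ ∫⁻ x, liminf (fun n => ENNReal.ofReal (χ n x)) atTop ∂μ := setLIntegral_le_lintegral _ _
    _ ≤ liminf (fun n => ∫⁻ x, ENNReal.ofReal (χ n x) ∂μ) atTop :=
        lintegral_liminf_le fun n => (hχ n).contDiff.continuous.measurable.ennreal_ofReal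
    _ ≤ liminf (fun _ => ν U) atTop := by
        refine liminf_le_liminf (Eventually.of_forall fun n => ?_)
        rw [← ofReal_integral_eq_lintegral_ofReal ((hχ n).integrable hμ)
          (Eventually.of_forall fun x => (hχ_mem n x).1)]
        exact (ENNReal.ofReal_le_ofReal (h _ (hχ n) fun x => (hχ_mem n x).1)).trans (hχν n)
    _ = ν U := liminf_const _

lemma le_of_forall_integral_isTestFunction_le (hB : IsOpen B) (hμB : ∀ s, μ s = μ (s ∩ B))
    (hμ : ∀ x ∈ B, μ.FiniteAtFilter (𝓝 x)) (hν : ∀ x ∈ B, ν.FiniteAtFilter (𝓝 x))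
    (h : ∀ φ, IsTestFunction φ B → (∀ x, 0 ≤ φ x) → ∫ x, φ x ∂μ ≤ ∫ x, φ x ∂ν) : μ ≤ ν := by
  have : LocallyCompactSpace B := hB.locallyCompactSpace
  have hcomap (ρ : Measure 𝔼) (s : Set B) :
      ρ.comap ((↑) : B → 𝔼) s = ρ ((↑) '' s) :=
    comap_subtype_coe_apply hB.measurableSet ρ s
  have : IsLocallyFiniteMeasure (ν.comap ((↑) : B → 𝔼)) := by
    refine ⟨fun x => ?_⟩
    obtain ⟨V, hV, hlt⟩ := hν x x.2
    refine ⟨(↑) ⁻¹' V, continuous_subtype_val.continuousAt.preimage_mem_nhds hV, ?_⟩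
    rw [hcomap]
    exact (measure_mono (Set.image_preimage_subset _ _)).trans_lt hlt
  have hle : μ.comap ((↑) : B → 𝔼) ≤ ν.comap ((↑) : B → 𝔼) := by
    refine le_of_forall_isOpen_measure_le fun V hV => ?_
    have hVB : (↑) '' V ⊆ B := Subtype.coe_image_subset B V
    rw [hcomap, hcomap]
    exact measure_le_of_forall_integral_isTestFunction_le (hB.isOpenMap_subtype_val V hV)
      (fun x hx => hμ x (hVB hx)) (fun x hx => hν x (hVB hx)) fun φ hφ => h φ (hφ.mono hVB)
  refine Measure.le_iff'.2 fun s => ?_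
  rw [hμB s, Set.inter_comm, ← Subtype.image_preimage_coe, ← hcomap]
  refine (hle _).trans ?_
  rw [hcomap]
  exact measure_mono (Set.image_preimage_subset _ _)

end MeasureComparison

theorem riesz_measure_comparison_general {u v : 𝔼 → EReal} {B : Set 𝔼} {μ ν : Measure 𝔼}
    (hB : IsOpen B) (hconn : IsPreconnected B) (hu : SubharmonicOn u B) (hv : SubharmonicOn v B)
    (hμ : IsRieszMeasureOf u B μ) (hν : IsRieszMeasureOf v B ν) (hle : ∀ x ∈ B, v x ≤ u x)
    (hpolar : μ {x | x ∈ B ∧ u x ≠ ⊥} = 0) : μ ≤ ν :=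
  le_of_forall_integral_isTestFunction_le hB hμ.1 hμ.2.1 hν.2.1 fun _ hφ hφ0 =>
    hμ.integral_le_integral hν hu hv hB hconn hle hpolar hφ hφ0

/-- **Comparison of Riesz measures (Lemme `lemme_sousharmonique`).**
Let `B` be the open unit ball of `ℝ^m` (`m ≥ 2`) and let `u, v : B → [-∞, +∞)` be
subharmonic on `B`, with Riesz measures `Δu = μ` and `Δv = ν`. If `v ≤ u` on `B` and
`μ` gives zero mass to `{x ∈ B : u x ≠ -∞}`, then `ν ≥ μ` as measures on `B`. -/
theorem riesz_measure_comparison (hm : 2 ≤ m)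
    (u v : EuclideanSpace ℝ (Fin m) → EReal)
    (μ ν : Measure (EuclideanSpace ℝ (Fin m)))
    (hu : SubharmonicOn u (ball (0 : EuclideanSpace ℝ (Fin m)) 1))
    (hv : SubharmonicOn v (ball (0 : EuclideanSpace ℝ (Fin m)) 1))
    (hμ : IsRieszMeasureOf u (ball (0 : EuclideanSpace ℝ (Fin m)) 1) μ)
    (hν : IsRieszMeasureOf v (ball (0 : EuclideanSpace ℝ (Fin m)) 1) ν)
    (hle : ∀ x ∈ ball (0 : EuclideanSpace ℝ (Fin m)) 1, v x ≤ u x)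
    (hpolar : μ {x | x ∈ ball (0 : EuclideanSpace ℝ (Fin m)) 1 ∧ u x ≠ ⊥} = 0) :
    μ ≤ ν :=
  riesz_measure_comparison_general isOpen_ball (convex_ball 0 1).isPreconnected hu hv hμ hν hle
    hpolar
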